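/- Assume 0.9·d_{i0} ≤ d_i ≤ 1.1·d_{i0} for every i, 0.9·d_0 ≤ d ≤ 1.1·d_0, ρ ≥ d² + 2‖e‖², 0 < ε ≤ 1/15, the Local RIP holds, and ‖𝒜*(e)‖ ≤ εd_0/(10√2·sκ). Suppose C_L > 0 is such that ‖∇F̃(z + tΔz) − ∇F̃(z)‖ ≤ C_L·t·‖Δz‖ for all t ∈ [0,1] whenever z + τΔz ∈ 𝒩_ε ∩ 𝒩_F̃ for all τ ∈ [0,1]. Let 0 < η ≤ 1/C_L. If z ∈ 𝒩_ε ∩ 𝒩_F̃, then z′ := z − η∇F̃(z) satisfies z′ ∈ 𝒩_ε ∩ 𝒩_F̃ and F̃(z′) ≤ F̃(z) − η‖∇F̃(z)‖². -/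

import Mathlib

noncomputable section
open Finset ComplexConjugate

namespace RGD

/-- Squared Euclidean norm of a complex vector. -/
def vnormSq {n : ℕ} (v : Fin n → ℂ) : ℝ := ∑ j, ‖v j‖ ^ 2

/-- Euclidean norm of a complex vector. -/
def vnorm {n : ℕ} (v : Fin n → ℂ) : ℝ := Real.sqrt (vnormSq v)

/-- Inner product, conjugate-linear in the first argument. -/
def vinner {n : ℕ} (u v : Fin n → ℂ) : ℂ := ∑ j, conj (u j) * v j

/-- Squared Frobenius norm of a matrix. -/
def frobSq {K N : ℕ} (Z : Matrix (Fin K) (Fin N) ℂ) : ℝ := ∑ k, ∑ j, ‖Z k j‖ ^ 2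

/-- Frobenius norm of a matrix. -/
def frob {K N : ℕ} (Z : Matrix (Fin K) (Fin N) ℂ) : ℝ := Real.sqrt (frobSq Z)

/-- Frobenius inner product `⟨U,V⟩ = Tr(U*V)`, conjugate-linear in the first argument. -/
def finner {K N : ℕ} (U V : Matrix (Fin K) (Fin N) ℂ) : ℂ := ∑ k, ∑ j, conj (U k j) * V k j

/-- Spectral (operator) norm of a matrix: sup of `‖Zv‖` over the closed unit ball. -/
def opNorm {K N : ℕ} (Z : Matrix (Fin K) (Fin N) ℂ) : ℝ :=
  sSup {r : ℝ | ∃ v : Fin N → ℂ, vnorm v ≤ 1 ∧ r = vnorm (Z.mulVec v)}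

/-- Squared Frobenius norm of a block-diagonal matrix, given by its diagonal blocks. -/
def famFrobSq {K N s : ℕ} (Z : Fin s → Matrix (Fin K) (Fin N) ℂ) : ℝ := ∑ i, frobSq (Z i)

/-- Frobenius norm of a block-diagonal matrix, given by its diagonal blocks. -/
def famFrob {K N s : ℕ} (Z : Fin s → Matrix (Fin K) (Fin N) ℂ) : ℝ := Real.sqrt (famFrobSq Z)

/-- The rank-one matrix `u v*`. -/
def rankOne {K N : ℕ} (u : Fin K → ℂ) (v : Fin N → ℂ) : Matrix (Fin K) (Fin N) ℂ :=
  Matrix.of fun k j => u k * conj (v j)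

/-- `ℋ(h,x)`: block-diagonal matrix with `i`-th block `hᵢ xᵢ*`. -/
def Hmap {K N s : ℕ} (h : Fin s → Fin K → ℂ) (x : Fin s → Fin N → ℂ) :
    Fin s → Matrix (Fin K) (Fin N) ℂ := fun i => rankOne (h i) (x i)

/-- `𝒜ᵢ(Z) = (bₗ* Z aₗ)ₗ`. -/
def calAi {K N L : ℕ} (b : Fin L → Fin K → ℂ) (a : Fin L → Fin N → ℂ)
    (Z : Matrix (Fin K) (Fin N) ℂ) : Fin L → ℂ :=
  fun l => vinner (b l) (Z.mulVec (a l))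

/-- `𝒜(Z) = Σᵢ 𝒜ᵢ(Zᵢ)` on block-diagonal matrices. -/
def calA {K N L s : ℕ} (b : Fin L → Fin K → ℂ) (a : Fin s → Fin L → Fin N → ℂ)
    (Z : Fin s → Matrix (Fin K) (Fin N) ℂ) : Fin L → ℂ :=
  fun l => ∑ i, calAi b (a i) (Z i) l

/-- `𝒜ᵢ*(z) = Σₗ zₗ bₗ aₗ*`. -/
def calAdj {K N L : ℕ} (b : Fin L → Fin K → ℂ) (a : Fin L → Fin N → ℂ)
    (z : Fin L → ℂ) : Matrix (Fin K) (Fin N) ℂ :=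
  Matrix.of fun k j => ∑ l, z l * b l k * conj (a l j)

/-- `‖𝒜*(e)‖ = maxᵢ ‖𝒜ᵢ*(e)‖` (operator norms). -/
def AadjNorm {K N L s : ℕ} (b : Fin L → Fin K → ℂ) (a : Fin s → Fin L → Fin N → ℂ)
    (e : Fin L → ℂ) : ℝ :=
  ⨆ i : Fin s, opNorm (calAdj b (a i) e)

/-- `B*B = I_K`, expressed in terms of the columns `bₗ` of `B*`. -/
def BtBeqI {K L : ℕ} (b : Fin L → Fin K → ℂ) : Prop :=
  ∀ k k' : Fin K, (∑ l, b l k * conj (b l k')) = if k = k' then (1 : ℂ) else 0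

/-- `μ ≥ μ_h`, i.e. `√L ‖B h_{i0}‖_∞ ≤ μ ‖h_{i0}‖` for all `i`. -/
def muhLe {K L s : ℕ} (b : Fin L → Fin K → ℂ) (h0 : Fin s → Fin K → ℂ) (μ : ℝ) : Prop :=
  ∀ i l, Real.sqrt L * ‖vinner (b l) (h0 i)‖ ≤ μ * vnorm (h0 i)

/-- `d₀ = √(Σᵢ d_{i0}²)`. -/
def dtot {s : ℕ} (d0 : Fin s → ℝ) : ℝ := Real.sqrt (∑ i, d0 i ^ 2)

/-- Condition number `κ = (maxᵢ d_{i0}) / (minᵢ d_{i0})`. -/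
def kappa {s : ℕ} (d0 : Fin s → ℝ) : ℝ := (⨆ i, d0 i) / (⨅ i, d0 i)

/-- The observation `y = 𝒜(ℋ(h₀,x₀)) + e`. -/
def yvec {K N L s : ℕ} (b : Fin L → Fin K → ℂ) (a : Fin s → Fin L → Fin N → ℂ)
    (h0 : Fin s → Fin K → ℂ) (x0 : Fin s → Fin N → ℂ) (e : Fin L → ℂ) : Fin L → ℂ :=
  fun l => calA b a (Hmap h0 x0) l + e l

/-- `F(h,x) = ‖𝒜(ℋ(h,x)) − y‖²`. -/
def Fobj {K N L s : ℕ} (b : Fin L → Fin K → ℂ) (a : Fin s → Fin L → Fin N → ℂ)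
    (h0 : Fin s → Fin K → ℂ) (x0 : Fin s → Fin N → ℂ) (e : Fin L → ℂ)
    (h : Fin s → Fin K → ℂ) (x : Fin s → Fin N → ℂ) : ℝ :=
  vnormSq (fun l => calA b a (Hmap h x) l - yvec b a h0 x0 e l)

def G0 (z : ℝ) : ℝ := max (z - 1) 0 ^ 2

def G0' (z : ℝ) : ℝ := 2 * max (z - 1) 0

/-- The `i`-th regularizer `Gᵢ(hᵢ,xᵢ)` (including the factor `ρ`). -/
def Gi {K N L : ℕ} (b : Fin L → Fin K → ℂ) (ρ μ di : ℝ)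
    (hi : Fin K → ℂ) (xi : Fin N → ℂ) : ℝ :=
  ρ * (G0 (vnormSq hi / (2 * di)) + G0 (vnormSq xi / (2 * di))
    + ∑ l, G0 ((L : ℝ) * ‖vinner (b l) hi‖ ^ 2 / (8 * di * μ ^ 2)))

/-- The regularizer `G(h,x) = Σᵢ Gᵢ(hᵢ,xᵢ)`. -/
def Greg {K N L s : ℕ} (b : Fin L → Fin K → ℂ) (ρ μ : ℝ) (dd : Fin s → ℝ)
    (h : Fin s → Fin K → ℂ) (x : Fin s → Fin N → ℂ) : ℝ :=
  ∑ i, Gi b ρ μ (dd i) (h i) (x i)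

/-- `F̃ = F + G`. -/
def Ftil {K N L s : ℕ} (b : Fin L → Fin K → ℂ) (a : Fin s → Fin L → Fin N → ℂ)
    (h0 : Fin s → Fin K → ℂ) (x0 : Fin s → Fin N → ℂ) (e : Fin L → ℂ)
    (ρ μ : ℝ) (dd : Fin s → ℝ)
    (h : Fin s → Fin K → ℂ) (x : Fin s → Fin N → ℂ) : ℝ :=
  Fobj b a h0 x0 e h x + Greg b ρ μ dd h x

/-- The residual `𝒜(ℋ(h,x)) − y`. -/
def residual {K N L s : ℕ} (b : Fin L → Fin K → ℂ) (a : Fin s → Fin L → Fin N → ℂ)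
    (h0 : Fin s → Fin K → ℂ) (x0 : Fin s → Fin N → ℂ) (e : Fin L → ℂ)
    (h : Fin s → Fin K → ℂ) (x : Fin s → Fin N → ℂ) : Fin L → ℂ :=
  fun l => calA b a (Hmap h x) l - yvec b a h0 x0 e l

/-- Wirtinger gradient `∇F_{hᵢ} = 𝒜ᵢ*(𝒜(ℋ(h,x)) − y) xᵢ`. -/
def gradFh {K N L s : ℕ} (b : Fin L → Fin K → ℂ) (a : Fin s → Fin L → Fin N → ℂ)
    (h0 : Fin s → Fin K → ℂ) (x0 : Fin s → Fin N → ℂ) (e : Fin L → ℂ)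
    (h : Fin s → Fin K → ℂ) (x : Fin s → Fin N → ℂ) (i : Fin s) : Fin K → ℂ :=
  (calAdj b (a i) (residual b a h0 x0 e h x)).mulVec (x i)

/-- Wirtinger gradient `∇F_{xᵢ} = (𝒜ᵢ*(𝒜(ℋ(h,x)) − y))* hᵢ`. -/
def gradFx {K N L s : ℕ} (b : Fin L → Fin K → ℂ) (a : Fin s → Fin L → Fin N → ℂ)
    (h0 : Fin s → Fin K → ℂ) (x0 : Fin s → Fin N → ℂ) (e : Fin L → ℂ)
    (h : Fin s → Fin K → ℂ) (x : Fin s → Fin N → ℂ) (i : Fin s) : Fin N → ℂ :=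
  (calAdj b (a i) (residual b a h0 x0 e h x)).conjTranspose.mulVec (h i)

/-- Wirtinger gradient `∇G_{hᵢ}`. -/
def gradGh {K L s : ℕ} (b : Fin L → Fin K → ℂ) (ρ μ : ℝ) (dd : Fin s → ℝ)
    (h : Fin s → Fin K → ℂ) (i : Fin s) : Fin K → ℂ :=
  fun k => ((ρ / (2 * dd i) : ℝ) : ℂ) *
    (((G0' (vnormSq (h i) / (2 * dd i)) : ℝ) : ℂ) * h i k
      + (((L : ℝ) / (4 * μ ^ 2) : ℝ) : ℂ) *
        ∑ l, ((G0' ((L : ℝ) * ‖vinner (b l) (h i)‖ ^ 2 / (8 * dd i * μ ^ 2)) : ℝ) : ℂ)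
          * (vinner (b l) (h i) * b l k))

/-- Wirtinger gradient `∇G_{xᵢ}`. -/
def gradGx {N s : ℕ} (ρ : ℝ) (dd : Fin s → ℝ)
    (x : Fin s → Fin N → ℂ) (i : Fin s) : Fin N → ℂ :=
  fun j => ((ρ / (2 * dd i) : ℝ) : ℂ) * (((G0' (vnormSq (x i) / (2 * dd i)) : ℝ) : ℂ) * x i j)

/-- `∇F̃_{hᵢ} = ∇F_{hᵢ} + ∇G_{hᵢ}`. -/
def gradH {K N L s : ℕ} (b : Fin L → Fin K → ℂ) (a : Fin s → Fin L → Fin N → ℂ)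
    (h0 : Fin s → Fin K → ℂ) (x0 : Fin s → Fin N → ℂ) (e : Fin L → ℂ)
    (ρ μ : ℝ) (dd : Fin s → ℝ)
    (h : Fin s → Fin K → ℂ) (x : Fin s → Fin N → ℂ) (i : Fin s) : Fin K → ℂ :=
  fun k => gradFh b a h0 x0 e h x i k + gradGh b ρ μ dd h i k

/-- `∇F̃_{xᵢ} = ∇F_{xᵢ} + ∇G_{xᵢ}`. -/
def gradX {K N L s : ℕ} (b : Fin L → Fin K → ℂ) (a : Fin s → Fin L → Fin N → ℂ)
    (h0 : Fin s → Fin K → ℂ) (x0 : Fin s → Fin N → ℂ) (e : Fin L → ℂ)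
    (ρ μ : ℝ) (dd : Fin s → ℝ)
    (h : Fin s → Fin K → ℂ) (x : Fin s → Fin N → ℂ) (i : Fin s) : Fin N → ℂ :=
  fun j => gradFx b a h0 x0 e h x i j + gradGx ρ dd x i j

/-- `‖∇F̃(h,x)‖²` (squared norm of the stacked Wirtinger gradient). -/
def gradNormSq {K N L s : ℕ} (b : Fin L → Fin K → ℂ) (a : Fin s → Fin L → Fin N → ℂ)
    (h0 : Fin s → Fin K → ℂ) (x0 : Fin s → Fin N → ℂ) (e : Fin L → ℂ)
    (ρ μ : ℝ) (dd : Fin s → ℝ)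
    (h : Fin s → Fin K → ℂ) (x : Fin s → Fin N → ℂ) : ℝ :=
  ∑ i, vnormSq (gradH b a h0 x0 e ρ μ dd h x i) + ∑ i, vnormSq (gradX b a h0 x0 e ρ μ dd h x i)

/-- `‖∇F̃(h',x') − ∇F̃(h,x)‖²`. -/
def gradDiffNormSq {K N L s : ℕ} (b : Fin L → Fin K → ℂ) (a : Fin s → Fin L → Fin N → ℂ)
    (h0 : Fin s → Fin K → ℂ) (x0 : Fin s → Fin N → ℂ) (e : Fin L → ℂ)
    (ρ μ : ℝ) (dd : Fin s → ℝ)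
    (h : Fin s → Fin K → ℂ) (x : Fin s → Fin N → ℂ)
    (h' : Fin s → Fin K → ℂ) (x' : Fin s → Fin N → ℂ) : ℝ :=
  ∑ i, vnormSq (fun k => gradH b a h0 x0 e ρ μ dd h' x' i k - gradH b a h0 x0 e ρ μ dd h x i k)
  + ∑ i, vnormSq (fun j => gradX b a h0 x0 e ρ μ dd h' x' i j - gradX b a h0 x0 e ρ μ dd h x i j)

/-- Membership in `𝒩_d`. -/
def inNd {K N s : ℕ} (d0 : Fin s → ℝ)
    (h : Fin s → Fin K → ℂ) (x : Fin s → Fin N → ℂ) : Prop :=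
  ∀ i, vnorm (h i) ≤ 2 * Real.sqrt (d0 i) ∧ vnorm (x i) ≤ 2 * Real.sqrt (d0 i)

/-- Membership in `𝒩_μ`. -/
def inNmu {K L s : ℕ} (b : Fin L → Fin K → ℂ) (d0 : Fin s → ℝ) (μ : ℝ)
    (h : Fin s → Fin K → ℂ) : Prop :=
  ∀ i, ∀ l, Real.sqrt L * ‖vinner (b l) (h i)‖ ≤ 4 * Real.sqrt (d0 i) * μ

/-- `δᵢ(hᵢ,xᵢ) = ‖hᵢxᵢ* − h_{i0}x_{i0}*‖_F / d_{i0}`. -/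
def deltaI {K N : ℕ} (h0i : Fin K → ℂ) (x0i : Fin N → ℂ) (d0i : ℝ)
    (hi : Fin K → ℂ) (xi : Fin N → ℂ) : ℝ :=
  frob (rankOne hi xi - rankOne h0i x0i) / d0i

/-- Membership in `𝒩_ε`. -/
def inNeps {K N s : ℕ} (h0 : Fin s → Fin K → ℂ) (x0 : Fin s → Fin N → ℂ)
    (d0 : Fin s → ℝ) (ε : ℝ)
    (h : Fin s → Fin K → ℂ) (x : Fin s → Fin N → ℂ) : Prop :=
  ∀ i, deltaI (h0 i) (x0 i) (d0 i) (h i) (x i) ≤ ε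

/-- The global relative error `δ(h,x) = ‖ℋ(h,x) − X₀‖_F / d₀`. -/
def deltaTot {K N s : ℕ} (h0 : Fin s → Fin K → ℂ) (x0 : Fin s → Fin N → ℂ)
    (d0 : Fin s → ℝ)
    (h : Fin s → Fin K → ℂ) (x : Fin s → Fin N → ℂ) : ℝ :=
  famFrob (fun i => Hmap h x i - Hmap h0 x0 i) / dtot d0

/-- Membership in `𝒩_F̃`. -/
def inNF {K N L s : ℕ} (b : Fin L → Fin K → ℂ) (a : Fin s → Fin L → Fin N → ℂ)
    (h0 : Fin s → Fin K → ℂ) (x0 : Fin s → Fin N → ℂ) (e : Fin L → ℂ)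
    (d0 : Fin s → ℝ) (ρ μ : ℝ) (dd : Fin s → ℝ) (ε : ℝ)
    (h : Fin s → Fin K → ℂ) (x : Fin s → Fin N → ℂ) : Prop :=
  Ftil b a h0 x0 e ρ μ dd h x ≤ ε ^ 2 * dtot d0 ^ 2 / (3 * (s : ℝ) * kappa d0 ^ 2) + vnormSq e

/-- The Local Restricted Isometry Property on `𝒩_d ∩ 𝒩_μ ∩ 𝒩_ε`. -/
def LocalRIP {K N L s : ℕ} (b : Fin L → Fin K → ℂ) (a : Fin s → Fin L → Fin N → ℂ)
    (h0 : Fin s → Fin K → ℂ) (x0 : Fin s → Fin N → ℂ)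
    (d0 : Fin s → ℝ) (μ ε : ℝ) : Prop :=
  ∀ (h : Fin s → Fin K → ℂ) (x : Fin s → Fin N → ℂ),
    inNd d0 h x → inNmu b d0 μ h → inNeps h0 x0 d0 ε h x →
      (2 / 3) * famFrobSq (fun i => Hmap h x i - Hmap h0 x0 i)
          ≤ vnormSq (calA b a fun i => Hmap h x i - Hmap h0 x0 i)
      ∧ vnormSq (calA b a fun i => Hmap h x i - Hmap h0 x0 i)
          ≤ (3 / 2) * famFrobSq (fun i => Hmap h x i - Hmap h0 x0 i)

/-- `α_{i1} = ⟨h_{i0}, hᵢ⟩ / d_{i0}`. -/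
def alpha1 {K s : ℕ} (h0 : Fin s → Fin K → ℂ) (d0 : Fin s → ℝ)
    (h : Fin s → Fin K → ℂ) (i : Fin s) : ℂ :=
  vinner (h0 i) (h i) / ((d0 i : ℝ) : ℂ)

/-- `α_{i2} = ⟨x_{i0}, xᵢ⟩ / d_{i0}`. -/
def alpha2 {N s : ℕ} (x0 : Fin s → Fin N → ℂ) (d0 : Fin s → ℝ)
    (x : Fin s → Fin N → ℂ) (i : Fin s) : ℂ :=
  vinner (x0 i) (x i) / ((d0 i : ℝ) : ℂ)

/-- `δ₀ = δ/10`. -/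
def delta0 {K N s : ℕ} (h0 : Fin s → Fin K → ℂ) (x0 : Fin s → Fin N → ℂ)
    (d0 : Fin s → ℝ) (h : Fin s → Fin K → ℂ) (x : Fin s → Fin N → ℂ) : ℝ :=
  deltaTot h0 x0 d0 h x / 10

/-- `αᵢ = (1−δ₀)α_{i1}` if `‖hᵢ‖ ≥ ‖xᵢ‖`, else `1/((1−δ₀) conj(α_{i2}))`. -/
def alphaC {K N s : ℕ} (h0 : Fin s → Fin K → ℂ) (x0 : Fin s → Fin N → ℂ)
    (d0 : Fin s → ℝ) (h : Fin s → Fin K → ℂ) (x : Fin s → Fin N → ℂ) (i : Fin s) : ℂ :=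
  if vnorm (x i) ≤ vnorm (h i)
  then ((1 - delta0 h0 x0 d0 h x : ℝ) : ℂ) * alpha1 h0 d0 h i
  else 1 / (((1 - delta0 h0 x0 d0 h x : ℝ) : ℂ) * conj (alpha2 x0 d0 x i))

/-- `Δhᵢ = hᵢ − αᵢ h_{i0}`. -/
def dh {K N s : ℕ} (h0 : Fin s → Fin K → ℂ) (x0 : Fin s → Fin N → ℂ)
    (d0 : Fin s → ℝ) (h : Fin s → Fin K → ℂ) (x : Fin s → Fin N → ℂ) (i : Fin s) :
    Fin K → ℂ :=
  fun k => h i k - alphaC h0 x0 d0 h x i * h0 i k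

/-- `Δxᵢ = xᵢ − conj(αᵢ)⁻¹ x_{i0}`. -/
def dx {K N s : ℕ} (h0 : Fin s → Fin K → ℂ) (x0 : Fin s → Fin N → ℂ)
    (d0 : Fin s → ℝ) (h : Fin s → Fin K → ℂ) (x : Fin s → Fin N → ℂ) (i : Fin s) :
    Fin N → ℂ :=
  fun j => x i j - (conj (alphaC h0 x0 d0 h x i))⁻¹ * x0 i j

/-- `σ²_max(h,x) = maxₗ Σᵢ |bₗ*hᵢ|² ‖xᵢ‖²`. -/
def sigmaMaxSq {K N L s : ℕ} (b : Fin L → Fin K → ℂ)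
    (h : Fin s → Fin K → ℂ) (x : Fin s → Fin N → ℂ) : ℝ :=
  ⨆ l : Fin L, ∑ i, ‖vinner (b l) (h i)‖ ^ 2 * vnormSq (x i)

/-- The rank-one bound (Lemma: `𝒜` on block-diagonal matrices with rank-1 blocks). -/
def RankOneBound {K N L s : ℕ} (b : Fin L → Fin K → ℂ)
    (a : Fin s → Fin L → Fin N → ℂ) : Prop :=
  ∀ (h : Fin s → Fin K → ℂ) (x : Fin s → Fin N → ℂ),
    vnormSq (calA b a (Hmap h x)) ≤
      4 / 3 * famFrobSq (Hmap h x)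
      + 2 * Real.sqrt (2 * (s : ℝ) * famFrobSq (Hmap h x) * sigmaMaxSq b h x
          * ((K : ℝ) + N) * Real.log L)
      + 8 * (s : ℝ) * sigmaMaxSq b h x * ((K : ℝ) + N) * Real.log L

/-- The subspace `Tᵢ = {h_{i0} v* + u x_{i0}*}`. -/
def Tspace {K N : ℕ} (h0i : Fin K → ℂ) (x0i : Fin N → ℂ) :
    Set (Matrix (Fin K) (Fin N) ℂ) :=
  {Z | ∃ (u : Fin K → ℂ) (v : Fin N → ℂ), Z = rankOne h0i v + rankOne u x0i}

/-- `P` is the orthogonal projection onto `Tᵢ` w.r.t. the Frobenius inner product. -/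
def IsFrobProj {K N : ℕ} (h0i : Fin K → ℂ) (x0i : Fin N → ℂ)
    (P : Matrix (Fin K) (Fin N) ℂ → Matrix (Fin K) (Fin N) ℂ) : Prop :=
  ∀ Z, P Z ∈ Tspace h0i x0i ∧ ∀ W ∈ Tspace h0i x0i, finner W (Z - P Z) = 0

/-- Operator norm of `𝒜ᵢ` from `(ℂ^{K×N}, ‖·‖_F)` to `(ℂ^L, ‖·‖)`. -/
def calAiOpNorm {K N L : ℕ} (b : Fin L → Fin K → ℂ) (a : Fin L → Fin N → ℂ) : ℝ :=
  sSup {r : ℝ | ∃ Z : Matrix (Fin K) (Fin N) ℂ, frob Z ≤ 1 ∧ r = vnorm (calAi b a Z)}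

/-- Operator norm of `𝒜` from block-diagonal matrices with `‖·‖_F` to `ℂ^L`. -/
def calAOpNorm {K N L s : ℕ} (b : Fin L → Fin K → ℂ)
    (a : Fin s → Fin L → Fin N → ℂ) : ℝ :=
  sSup {r : ℝ | ∃ Z : Fin s → Matrix (Fin K) (Fin N) ℂ, famFrob Z ≤ 1 ∧ r = vnorm (calA b a Z)}

/-- Norm of a stacked vector in `ℂ^{ns}`. -/
def stackNorm {n s : ℕ} (u : Fin s → Fin n → ℂ) : ℝ := Real.sqrt (∑ i, vnormSq (u i))

/-- Norm of a point `z = (h,x) ∈ ℂ^{s(K+N)}`. -/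
def pairNorm {K N s : ℕ} (u : Fin s → Fin K → ℂ) (v : Fin s → Fin N → ℂ) : ℝ :=
  Real.sqrt (∑ i, vnormSq (u i) + ∑ i, vnormSq (v i))

/-- `z + t • w` componentwise, `t` real. -/
def shiftV {n s : ℕ} (u w : Fin s → Fin n → ℂ) (t : ℝ) : Fin s → Fin n → ℂ :=
  fun i k => u i k + (t : ℂ) * w i k

/-- `σ_max(h) = maxₗ √(Σᵢ |bₗ*hᵢ|²)` (unit `xᵢ`'s). -/
def sigmaMaxU {K L s : ℕ} (b : Fin L → Fin K → ℂ) (h : Fin s → Fin K → ℂ) : ℝ :=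
  ⨆ l, Real.sqrt (∑ i, ‖vinner (b l) (h i)‖ ^ 2)

open scoped Topology

/-!
On `𝒩_F̃` the regularizer is so small that the point lies in `𝒩_d ∩ 𝒩_μ`, so on `𝒩_ε ∩ 𝒩_F̃` the
lower RIP bound applies. Together with the value bound defining `𝒩_F̃` and the bound on `𝒜*(e)`,
tested against blocks `hᵢxᵢ* − h_{i0}x_{i0}*` of rank at most two, it gives
`‖ℋ(h,x) − X₀‖_F < ε d₀ / (√s κ) ≤ ε d_{i0}`: the constraint `δᵢ ≤ ε` is never active there.

Along the ray `z − t∇F̃(z)`, as long as it stays in `𝒩_ε ∩ 𝒩_F̃`, the Lipschitz bound makes `F̃`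
strictly decreasing for `t < 1/C_L`. Hence the ray cannot leave `𝒩_F̃`, and since `𝒩_ε` could only
be left through an active constraint, it cannot leave `𝒩_ε` either. Integrating the derivative
bound up to `t = η` gives the decrease of `F̃`. The Wirtinger gradient is half the gradient for the
real Euclidean structure, which accounts for the factor `η` in place of the usual `η/2`.
-/

section GradientStep

variable {E : Type*} [NormedAddCommGroup E] [InnerProductSpace ℝ E] {f : E → ℝ} {g : E → E}
  {D : Set E} {c C η : ℝ} {z : E}

lemma eventually_lt_of_hasDerivAt_neg {φ : ℝ → ℝ} {φ' t : ℝ} (hφ : HasDerivAt φ φ' t)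
    (hneg : φ' < 0) : ∀ᶠ u in 𝓝[>] t, φ u < φ t := by
  have hslope := (hasDerivWithinAt_iff_tendsto_slope' Set.self_notMem_Ioi).1
    (hφ.hasDerivWithinAt (s := Set.Ioi t))
  filter_upwards [hslope.eventually_lt_const hneg, self_mem_nhdsWithin] with u hu htu
  rw [slope_def_field, div_lt_iff₀ (sub_pos.2 htu), zero_mul] at hu
  linarith

lemma le_sub_of_hasDerivAt_le {φ φ' : ℝ → ℝ} {W : ℝ} (hφ : ∀ t, HasDerivAt φ (φ' t) t)
    (hη : 0 ≤ η) (hbound : ∀ t ∈ Set.Ico 0 η, φ' t ≤ -((1 - C * t) * W)) :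
    φ η ≤ φ 0 - (η - C * η ^ 2 / 2) * W := by
  have hB : ∀ t, HasDerivAt (fun t => φ 0 - (t - C * t ^ 2 / 2) * W) (-((1 - C * t) * W)) t := by
    intro t
    refine ((((hasDerivAt_id t).sub (((hasDerivAt_pow 2 t).const_mul C).div_const 2)).mul_const
      W).const_sub (φ 0)).congr_deriv ?_
    push_cast
    ring
  exact image_le_of_deriv_right_le_deriv_boundary
    (fun t _ => (hφ t).continuousAt.continuousWithinAt) (fun t _ => (hφ t).hasDerivWithinAt)
    (by simp) (fun t _ => (hB t).continuousAt.continuousWithinAt)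
    (fun t _ => (hB t).hasDerivWithinAt) hbound (Set.right_mem_Icc.2 hη)

lemma hasDerivAt_sub_smul (hf : ∀ z w, HasLineDerivAt ℝ f (inner ℝ (g z) w) z w) (z w : E)
    (t : ℝ) : HasDerivAt (fun t : ℝ => f (z - t • w)) (-inner ℝ (g (z - t • w)) w) t := by
  have hline : HasDerivAt (fun τ : ℝ => f (z - t • w + τ • -w)) (inner ℝ (g (z - t • w)) (-w))
      (t - t) := by
    rw [sub_self]
    exact hf (z - t • w) (-w)
  have hpath : ∀ τ : ℝ, z - t • w + (τ - t) • -w = z - τ • w := fun τ => by module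
  simpa only [hpath, inner_neg_right] using hline.comp_sub_const t t

lemma neg_inner_le_of_norm_sub_le {u v : E} {r : ℝ} (h : ‖v - u‖ ≤ r * ‖u‖) :
    -inner ℝ v u ≤ -((1 - r) * ‖u‖ ^ 2) := by
  have hcs : -inner ℝ (v - u) u ≤ ‖v - u‖ * ‖u‖ :=
    (neg_le_abs _).trans (abs_real_inner_le_norm _ _)
  have hmul := mul_le_mul_of_nonneg_right h (norm_nonneg u)
  rw [inner_sub_left, real_inner_self_eq_norm_sq] at hcs
  linarith

lemma segment_sub_smul_subset {S : Set E} {w : E} {T : ℝ} (hT : 0 ≤ T)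
    (h : ∀ t ∈ Set.Icc 0 T, z - t • w ∈ S) : segment ℝ z (z - T • w) ⊆ S := by
  rw [segment_eq_image']
  rintro _ ⟨θ, hθ, rfl⟩
  convert h (θ * T) ⟨mul_nonneg hθ.1 hT, mul_le_of_le_one_left hT hθ.2⟩ using 1
  module

lemma neg_inner_gradient_le {S : Set E} {T : ℝ} (hT : 0 ≤ T)
    (hlip : ∀ z w, segment ℝ z w ⊆ S → ‖g w - g z‖ ≤ C * ‖w - z‖)
    (hray : ∀ t ∈ Set.Icc 0 T, z - t • g z ∈ S) :
    -inner ℝ (g (z - T • g z)) (g z) ≤ -((1 - C * T) * ‖g z‖ ^ 2) := by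
  refine neg_inner_le_of_norm_sub_le
    ((hlip _ _ (segment_sub_smul_subset hT hray)).trans_eq ?_)
  rw [sub_sub_cancel_left, norm_neg, norm_smul, Real.norm_of_nonneg hT, mul_assoc]

/-- Continuation in `t`: `f` strictly decreases along the ray, so the ray can only leave
`D ∩ {f ≤ c}` through the boundary of `D`, which that set avoids. -/
lemma gradient_ray_mem (hf : ∀ z w, HasLineDerivAt ℝ f (inner ℝ (g z) w) z w)
    (hD : IsClosed D) (hnhds : ∀ z ∈ D, f z ≤ c → D ∈ 𝓝 z)
    (hlip : ∀ z w, segment ℝ z w ⊆ D ∩ {z | f z ≤ c} → ‖g w - g z‖ ≤ C * ‖w - z‖)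
    (hCη : C * η ≤ 1) (hz : z ∈ D ∩ {z | f z ≤ c}) :
    ∀ t ∈ Set.Icc 0 η, z - t • g z ∈ D ∩ {z | f z ≤ c} := by
  rcases eq_or_ne (g z) 0 with hg | hg
  · simpa [hg] using fun _ _ _ => hz
  have hderiv := hasDerivAt_sub_smul hf z (g z)
  have hray : Continuous fun t : ℝ => z - t • g z := by fun_prop
  have hφ : Continuous fun t : ℝ => f (z - t • g z) :=
    continuous_iff_continuousAt.2 fun t => (hderiv t).continuousAt
  refine IsClosed.Icc_subset_of_forall_mem_nhdsGT_of_Icc_subset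
    (s := {t : ℝ | z - t • g z ∈ D ∩ {z | f z ≤ c}})
    (((hD.preimage hray).inter (isClosed_le hφ continuous_const)).inter isClosed_Icc)
    (by simpa using hz) fun T hT hsub => ?_
  have hTmem := hsub (Set.right_mem_Icc.2 hT.1)
  have hslope : -inner ℝ (g (z - T • g z)) (g z) < 0 := by
    have hCT : 0 < 1 - C * T := by nlinarith [hT.1, hT.2]
    have := neg_inner_gradient_le hT.1 hlip hsub
    have : 0 < (1 - C * T) * ‖g z‖ ^ 2 := by positivity
    linarith
  filter_upwards [eventually_lt_of_hasDerivAt_neg (hderiv T) hslope,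
    nhdsWithin_le_nhds (hray.continuousAt (hnhds _ hTmem.1 hTmem.2))] with t hlt htD
  exact ⟨htD, hlt.le.trans hTmem.2⟩

theorem gradient_step_mem_and_le (hf : ∀ z w, HasLineDerivAt ℝ f (inner ℝ (g z) w) z w)
    (hD : IsClosed D) (hnhds : ∀ z ∈ D, f z ≤ c → D ∈ 𝓝 z)
    (hlip : ∀ z w, segment ℝ z w ⊆ D ∩ {z | f z ≤ c} → ‖g w - g z‖ ≤ C * ‖w - z‖)
    (hη : 0 ≤ η) (hCη : C * η ≤ 1) (hz : z ∈ D ∩ {z | f z ≤ c}) :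
    z - η • g z ∈ D ∩ {z | f z ≤ c} ∧ f (z - η • g z) ≤ f z - η / 2 * ‖g z‖ ^ 2 := by
  have hray := gradient_ray_mem hf hD hnhds hlip hCη hz
  refine ⟨hray η (Set.right_mem_Icc.2 hη), ?_⟩
  have hdescent := le_sub_of_hasDerivAt_le (hasDerivAt_sub_smul hf z (g z)) hη fun T hT =>
    neg_inner_gradient_le hT.1 hlip fun t ht => hray t ⟨ht.1, ht.2.trans hT.2.le⟩
  have hstep : η / 2 ≤ η - C * η ^ 2 / 2 := by nlinarith
  have := mul_le_mul_of_nonneg_right hstep (sq_nonneg ‖g z‖)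
  simp only [zero_smul, sub_zero] at hdescent
  linarith

theorem half_gradient_step_mem_and_le
    (hf : ∀ z w, HasLineDerivAt ℝ f (2 * inner ℝ (g z) w) z w)
    (hD : IsClosed D) (hnhds : ∀ z ∈ D, f z ≤ c → D ∈ 𝓝 z)
    (hlip : ∀ z w, segment ℝ z w ⊆ D ∩ {z | f z ≤ c} → ‖g w - g z‖ ≤ C * ‖w - z‖)
    (hη : 0 ≤ η) (hCη : C * η ≤ 1) (hz : z ∈ D ∩ {z | f z ≤ c}) :
    z - η • g z ∈ D ∩ {z | f z ≤ c} ∧ f (z - η • g z) ≤ f z - η * ‖g z‖ ^ 2 := by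
  have hstep := gradient_step_mem_and_le (g := fun z => (2 : ℝ) • g z) (C := 2 * C) (η := η / 2)
    (fun z w => by simpa only [real_inner_smul_left] using hf z w) hD hnhds
    (fun z w hzw => by
      rw [← smul_sub, norm_smul, Real.norm_ofNat, mul_assoc]
      exact mul_le_mul_of_nonneg_left (hlip z w hzw) zero_le_two)
    (by linarith) (by linarith) hz
  simp only [smul_smul, norm_smul, Real.norm_ofNat, div_mul_cancel₀ η (two_ne_zero (α := ℝ))]
    at hstep
  exact ⟨hstep.1, hstep.2.trans_eq (by ring)⟩

end GradientStep

section Vectors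

variable {n : ℕ} (u v w : Fin n → ℂ)

lemma vinner_eq_dotProduct : vinner u v = star u ⬝ᵥ v := rfl

lemma vinner_eq_inner : vinner u v = inner ℂ (WithLp.toLp 2 u) (WithLp.toLp 2 v) := by
  rw [EuclideanSpace.inner_toLp_toLp, dotProduct_comm, vinner_eq_dotProduct]

lemma vnorm_eq_norm : vnorm v = ‖WithLp.toLp 2 v‖ := by
  rw [EuclideanSpace.norm_eq, vnorm, vnormSq]

lemma vnorm_nonneg : 0 ≤ vnorm v := Real.sqrt_nonneg _

lemma vnormSq_nonneg : 0 ≤ vnormSq v := sum_nonneg fun _ _ => sq_nonneg _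

lemma vnorm_sq : vnorm v ^ 2 = vnormSq v := Real.sq_sqrt (vnormSq_nonneg v)

lemma vinner_self : vinner v v = vnormSq v := by
  simp only [vinner, vnormSq, Complex.conj_mul', Complex.ofReal_sum, Complex.ofReal_pow]

lemma conj_vinner : conj (vinner u v) = vinner v u := by
  rw [vinner_eq_inner, vinner_eq_inner, inner_conj_symm]

lemma vinner_add_left : vinner (u + v) w = vinner u w + vinner v w := by
  simp only [vinner_eq_dotProduct, star_add, add_dotProduct]

lemma vinner_sub_right : vinner u (v - w) = vinner u v - vinner u w := by
  simp only [vinner_eq_dotProduct, dotProduct_sub]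

lemma vinner_smul_left (c : ℂ) : vinner (c • u) v = conj c * vinner u v := by
  simp only [vinner_eq_dotProduct, star_smul, smul_dotProduct, smul_eq_mul, starRingEnd_apply]

lemma vinner_smul_right (c : ℂ) : vinner u (c • v) = c * vinner u v := by
  simp only [vinner_eq_dotProduct, dotProduct_smul, smul_eq_mul]

lemma vinner_sum_left {ι : Type*} (t : Finset ι) (f : ι → Fin n → ℂ) :
    vinner (∑ l ∈ t, f l) v = ∑ l ∈ t, vinner (f l) v := by
  simp only [vinner_eq_dotProduct, star_sum, sum_dotProduct]

lemma norm_vinner_le : ‖vinner u v‖ ≤ vnorm u * vnorm v := by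
  rw [vinner_eq_inner, vnorm_eq_norm, vnorm_eq_norm]
  exact norm_inner_le_norm _ _

lemma vnormSq_sub : vnormSq (u - v) = vnormSq u - 2 * (vinner v u).re + vnormSq v := by
  simp only [← vnorm_sq, vnorm_eq_norm, vinner_eq_inner, WithLp.toLp_sub]
  rw [@norm_sub_sq ℂ, inner_re_symm, RCLike.re_eq_complex_re]

lemma exists_vinner_sub_smul_eq_zero : ∃ c : ℂ, vinner u (v - c • u) = 0 := by
  refine ⟨vinner u v / vinner u u, ?_⟩
  rcases eq_or_ne (vinner u u) 0 with hu | hu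
  · have huv := norm_vinner_le u v
    rw [vinner_self, Complex.ofReal_eq_zero] at hu
    rw [vnorm, hu, Real.sqrt_zero, zero_mul, norm_le_zero_iff] at huv
    simp [huv]
  · rw [vinner_sub_right, vinner_smul_right, div_mul_cancel₀ _ hu, sub_self]

end Vectors

section Matrices

variable {K N : ℕ}

lemma frobSq_nonneg (Z : Matrix (Fin K) (Fin N) ℂ) : 0 ≤ frobSq Z :=
  sum_nonneg fun _ _ => sum_nonneg fun _ _ => sq_nonneg _

lemma frob_nonneg (Z : Matrix (Fin K) (Fin N) ℂ) : 0 ≤ frob Z := Real.sqrt_nonneg _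

lemma frob_sq (Z : Matrix (Fin K) (Fin N) ℂ) : frob Z ^ 2 = frobSq Z :=
  Real.sq_sqrt (frobSq_nonneg Z)

lemma finner_self (Z : Matrix (Fin K) (Fin N) ℂ) : finner Z Z = frobSq Z := by
  simp only [finner, frobSq, Complex.conj_mul', Complex.ofReal_sum, Complex.ofReal_pow]

lemma finner_sum_left {ι : Type*} (t : Finset ι) (f : ι → Matrix (Fin K) (Fin N) ℂ)
    (Z : Matrix (Fin K) (Fin N) ℂ) : finner (∑ l ∈ t, f l) Z = ∑ l ∈ t, finner (f l) Z := by
  simp only [finner, Matrix.sum_apply, map_sum, sum_mul]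
  simp only [sum_comm (t := t)]

lemma finner_smul_left (c : ℂ) (U V : Matrix (Fin K) (Fin N) ℂ) :
    finner (c • U) V = conj c * finner U V := by
  simp only [finner, Matrix.smul_apply, smul_eq_mul, map_mul, mul_sum, mul_assoc]

lemma finner_add_right (U V W : Matrix (Fin K) (Fin N) ℂ) :
    finner U (V + W) = finner U V + finner U W := by
  simp only [finner, Matrix.add_apply, mul_add, sum_add_distrib]

lemma finner_rankOne (M : Matrix (Fin K) (Fin N) ℂ) (h : Fin K → ℂ) (x : Fin N → ℂ) :
    finner M (rankOne h x) = vinner (M.mulVec x) h := by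
  simp only [finner, vinner, rankOne, Matrix.mulVec, dotProduct, Matrix.of_apply, map_sum,
    map_mul, sum_mul]
  exact sum_congr rfl fun k _ => sum_congr rfl fun j _ => by ring

lemma vinner_mulVec_conjTranspose (M : Matrix (Fin K) (Fin N) ℂ) (h : Fin K → ℂ)
    (x : Fin N → ℂ) : vinner (M.conjTranspose.mulVec h) x = vinner h (M.mulVec x) := by
  rw [vinner_eq_dotProduct, Matrix.star_mulVec, Matrix.conjTranspose_conjTranspose,
    ← Matrix.dotProduct_mulVec, vinner_eq_dotProduct]

lemma rankOne_mulVec (h : Fin K → ℂ) (x v : Fin N → ℂ) :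
    (rankOne h x).mulVec v = vinner x v • h := by
  ext k
  simp only [rankOne, Matrix.mulVec, dotProduct, Matrix.of_apply, Pi.smul_apply, smul_eq_mul,
    vinner, sum_mul]
  exact sum_congr rfl fun j _ => by ring

lemma frobSq_rankOne_add_rankOne (p q : Fin K → ℂ) {u v : Fin N → ℂ} (huv : vinner u v = 0) :
    frobSq (rankOne p u + rankOne q v) = vnormSq p * vnormSq u + vnormSq q * vnormSq v := by
  have hvu : vinner v u = 0 := by rw [← conj_vinner, huv, map_zero]
  have h : finner (rankOne p u + rankOne q v) (rankOne p u + rankOne q v)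
      = vinner u u * vinner p p + vinner v v * vinner q q := by
    simp only [finner_add_right, finner_rankOne, Matrix.add_mulVec, rankOne_mulVec,
      vinner_add_left, vinner_smul_left, huv, hvu, map_zero, zero_mul, add_zero, zero_add,
      conj_vinner]
  simp only [finner_self, vinner_self] at h
  rw [mul_comm (vnormSq p), mul_comm (vnormSq q)]
  exact_mod_cast h

lemma exists_orthogonal_rankOne_add_rankOne (p q : Fin K → ℂ) (u v : Fin N → ℂ) :
    ∃ (p' : Fin K → ℂ) (v' : Fin N → ℂ), vinner u v' = 0 ∧
      rankOne p u + rankOne q v = rankOne p' u + rankOne q v' := by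
  obtain ⟨c, hc⟩ := exists_vinner_sub_smul_eq_zero u v
  refine ⟨p + conj c • q, v - c • u, hc, ?_⟩
  ext k j
  simp only [rankOne, Matrix.add_apply, Matrix.of_apply, Pi.add_apply, Pi.sub_apply,
    Pi.smul_apply, smul_eq_mul, map_sub, map_mul]
  ring

lemma opNorm_eq_norm (Z : Matrix (Fin K) (Fin N) ℂ) :
    opNorm Z = ‖(Matrix.toEuclideanLin Z).toContinuousLinearMap‖ := by
  rw [← ContinuousLinearMap.sSup_unitClosedBall_eq_norm, opNorm]
  congr 1
  ext r
  constructor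
  · rintro ⟨v, hv, rfl⟩
    refine ⟨WithLp.toLp 2 v, ?_, ?_⟩
    · simpa [vnorm_eq_norm] using hv
    · simp [vnorm_eq_norm]
  · rintro ⟨v, hv, rfl⟩
    refine ⟨WithLp.ofLp v, ?_, ?_⟩
    · simpa [vnorm_eq_norm] using hv
    · simp [vnorm_eq_norm, Matrix.toLpLin_apply]

lemma opNorm_nonneg (Z : Matrix (Fin K) (Fin N) ℂ) : 0 ≤ opNorm Z := by
  rw [opNorm_eq_norm]
  exact norm_nonneg _

lemma vnorm_mulVec_le (Z : Matrix (Fin K) (Fin N) ℂ) (v : Fin N → ℂ) :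
    vnorm (Z.mulVec v) ≤ opNorm Z * vnorm v := by
  rw [opNorm_eq_norm, vnorm_eq_norm, vnorm_eq_norm]
  exact (Matrix.toEuclideanLin Z).toContinuousLinearMap.le_opNorm (WithLp.toLp 2 v)

lemma norm_finner_rankOne_le (M : Matrix (Fin K) (Fin N) ℂ) (h : Fin K → ℂ) (x : Fin N → ℂ) :
    ‖finner M (rankOne h x)‖ ≤ opNorm M * (vnorm h * vnorm x) := by
  rw [finner_rankOne, mul_comm (vnorm h), ← mul_assoc]
  exact (norm_vinner_le _ _).trans
    (mul_le_mul_of_nonneg_right (vnorm_mulVec_le _ _) (vnorm_nonneg _))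

/-- Trace duality: a matrix of rank at most two has nuclear norm at most `√2` times its
Frobenius norm. -/
lemma norm_finner_rankOne_add_rankOne_le (M : Matrix (Fin K) (Fin N) ℂ) (p q : Fin K → ℂ)
    (u v : Fin N → ℂ) :
    ‖finner M (rankOne p u + rankOne q v)‖
      ≤ √2 * opNorm M * frob (rankOne p u + rankOne q v) := by
  obtain ⟨p, v, huv, heq⟩ := exists_orthogonal_rankOne_add_rankOne p q u v
  rw [heq, finner_add_right]
  have hnuclear : vnorm p * vnorm u + vnorm q * vnorm v
      ≤ √2 * frob (rankOne p u + rankOne q v) := by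
    rw [frob, ← Real.sqrt_mul zero_le_two]
    refine Real.le_sqrt_of_sq_le ?_
    rw [frobSq_rankOne_add_rankOne p q huv]
    simp only [← vnorm_sq, ← mul_pow]
    exact add_sq_le
  calc ‖finner M (rankOne p u) + finner M (rankOne q v)‖
      ≤ opNorm M * (vnorm p * vnorm u) + opNorm M * (vnorm q * vnorm v) :=
        norm_add_le_of_le (norm_finner_rankOne_le _ _ _) (norm_finner_rankOne_le _ _ _)
    _ = opNorm M * (vnorm p * vnorm u + vnorm q * vnorm v) := by ring
    _ ≤ opNorm M * (√2 * frob (rankOne p u + rankOne q v)) :=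
        mul_le_mul_of_nonneg_left hnuclear (opNorm_nonneg M)
    _ = √2 * opNorm M * frob (rankOne p u + rankOne q v) := by ring

lemma norm_finner_rankOne_sub_rankOne_le (M : Matrix (Fin K) (Fin N) ℂ) (p q : Fin K → ℂ)
    (u v : Fin N → ℂ) :
    ‖finner M (rankOne p u - rankOne q v)‖
      ≤ √2 * opNorm M * frob (rankOne p u - rankOne q v) := by
  have hsub : rankOne p u - rankOne q v = rankOne p u + rankOne (-q) v := by
    ext k j
    simp [rankOne, sub_eq_add_neg]
  rw [hsub]
  exact norm_finner_rankOne_add_rankOne_le M p (-q) u v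

lemma calAi_eq_finner {L : ℕ} (b : Fin L → Fin K → ℂ) (a : Fin L → Fin N → ℂ)
    (Z : Matrix (Fin K) (Fin N) ℂ) (l : Fin L) :
    calAi b a Z l = finner (rankOne (b l) (a l)) Z := by
  simp only [calAi, finner, vinner, rankOne, Matrix.mulVec, dotProduct, Matrix.of_apply, map_mul,
    Complex.conj_conj, mul_sum]
  exact sum_congr rfl fun k _ => sum_congr rfl fun j _ => by ring

lemma calAdj_eq_sum_rankOne {L : ℕ} (b : Fin L → Fin K → ℂ) (a : Fin L → Fin N → ℂ)
    (z : Fin L → ℂ) : calAdj b a z = ∑ l, z l • rankOne (b l) (a l) := by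
  ext k j
  simp [calAdj, rankOne, Matrix.sum_apply, mul_assoc]

lemma finner_calAdj {L : ℕ} (b : Fin L → Fin K → ℂ) (a : Fin L → Fin N → ℂ) (z : Fin L → ℂ)
    (Z : Matrix (Fin K) (Fin N) ℂ) : finner (calAdj b a z) Z = vinner z (calAi b a Z) := by
  simp only [calAdj_eq_sum_rankOne, finner_sum_left, finner_smul_left, vinner, calAi_eq_finner]

end Matrices

section Derivatives

variable {n : ℕ} {u : ℝ → Fin n → ℂ} {u' : Fin n → ℂ} {t : ℝ}

lemma hasDerivAt_norm_sq {f : ℝ → ℂ} {f' : ℂ} (hf : HasDerivAt f f' t) :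
    HasDerivAt (fun t => ‖f t‖ ^ 2) (2 * (conj (f t) * f').re) t := by
  simpa [Complex.inner, mul_comm] using hf.norm_sq

lemma hasDerivAt_vnormSq (hu : HasDerivAt u u' t) :
    HasDerivAt (fun t => vnormSq (u t)) (2 * (vinner (u t) u').re) t := by
  simp only [vnormSq, vinner, Complex.re_sum, mul_sum]
  exact HasDerivAt.fun_sum fun k _ => hasDerivAt_norm_sq (hasDerivAt_pi.1 hu k)

lemma hasDerivAt_vinner_right (c : Fin n → ℂ) (hu : HasDerivAt u u' t) :
    HasDerivAt (fun t => vinner c (u t)) (vinner c u') t :=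
  HasDerivAt.fun_sum fun k _ => (hasDerivAt_pi.1 hu k).const_mul _

lemma hasDerivAt_G0 (z : ℝ) : HasDerivAt G0 (G0' z) z := by
  refine hasDerivAt_of_hasDerivAt_of_ne' (x := 1) (fun y hy => ?_) ?_ ?_ z
  · rcases lt_or_gt_of_ne hy with hlt | hgt
    · have hG0' : G0' y = 0 := by rw [G0', max_eq_right (by linarith), mul_zero]
      rw [hG0']
      refine (hasDerivAt_const y (0 : ℝ)).congr_of_eventuallyEq ?_
      filter_upwards [gt_mem_nhds hlt] with v hv
      rw [G0, max_eq_right (by linarith), zero_pow two_ne_zero]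
    · have hsq : HasDerivAt (fun v : ℝ => (v - 1) ^ 2) (G0' y) y := by
        simpa [G0', max_eq_left (sub_pos.2 hgt).le] using
          ((hasDerivAt_id y).sub_const 1).fun_pow 2
      refine hsq.congr_of_eventuallyEq ?_
      filter_upwards [lt_mem_nhds hgt] with v hv
      rw [G0, max_eq_left (by linarith)]
  · unfold G0
    fun_prop
  · unfold G0'
    fun_prop

lemma hasDerivAt_G0_vnormSq (hu : HasDerivAt u u' t) (d : ℝ) :
    HasDerivAt (fun t => G0 (vnormSq (u t) / (2 * d)))
      (G0' (vnormSq (u t) / (2 * d)) * ((vinner (u t) u').re / d)) t := by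
  refine ((hasDerivAt_G0 _).comp t ((hasDerivAt_vnormSq hu).div_const (2 * d))).congr_deriv ?_
  rw [mul_div_mul_left _ _ two_ne_zero]

lemma hasDerivAt_sum_G0_norm_vinner_sq {L : ℕ} (hu : HasDerivAt u u' t) (b : Fin L → Fin n → ℂ)
    (c d μ : ℝ) :
    HasDerivAt (fun t => ∑ l, G0 (c * ‖vinner (b l) (u t)‖ ^ 2 / (8 * d * μ ^ 2)))
      (c / (4 * μ ^ 2) * (∑ l, G0' (c * ‖vinner (b l) (u t)‖ ^ 2 / (8 * d * μ ^ 2))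
        * (vinner (vinner (b l) (u t) • b l) u').re) / d) t := by
  refine (HasDerivAt.fun_sum fun l _ => (hasDerivAt_G0 _).comp t (((hasDerivAt_norm_sq
    (hasDerivAt_vinner_right (b l) hu)).const_mul c).div_const (8 * d * μ ^ 2))).congr_deriv ?_
  rw [mul_sum, sum_div]
  exact sum_congr rfl fun l _ => by rw [vinner_smul_left]; ring

end Derivatives

section Objective

variable {K N L s : ℕ} (b : Fin L → Fin K → ℂ) (a : Fin s → Fin L → Fin N → ℂ)
  (h0 : Fin s → Fin K → ℂ) (x0 : Fin s → Fin N → ℂ) (e : Fin L → ℂ) (ρ μ : ℝ) (dd : Fin s → ℝ)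
  {h : ℝ → Fin s → Fin K → ℂ} {h' : Fin s → Fin K → ℂ}
  {x : ℝ → Fin s → Fin N → ℂ} {x' : Fin s → Fin N → ℂ} {t : ℝ}

lemma vinner_calA (z : Fin L → ℂ) (Z : Fin s → Matrix (Fin K) (Fin N) ℂ) :
    vinner z (calA b a Z) = ∑ i, finner (calAdj b (a i) z) (Z i) := by
  simp only [finner_calAdj, vinner, calA, mul_sum]
  exact sum_comm

lemma calA_sub (Z Z' : Fin s → Matrix (Fin K) (Fin N) ℂ) :
    calA b a (fun i => Z i - Z' i) = calA b a Z - calA b a Z' := by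
  ext l
  simp only [calA, calAi, Matrix.sub_mulVec, vinner_sub_right, sum_sub_distrib, Pi.sub_apply]

lemma hasDerivAt_rankOne_apply {p : ℝ → Fin K → ℂ} {p' : Fin K → ℂ} {q : ℝ → Fin N → ℂ}
    {q' : Fin N → ℂ} (hp : HasDerivAt p p' t) (hq : HasDerivAt q q' t) (k : Fin K) (j : Fin N) :
    HasDerivAt (fun t => rankOne (p t) (q t) k j)
      ((rankOne p' (q t) + rankOne (p t) q') k j) t :=
  (hasDerivAt_pi.1 hp k).mul (hasDerivAt_pi.1 hq j).star

lemma hasDerivAt_calA {Z : ℝ → Fin s → Matrix (Fin K) (Fin N) ℂ}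
    {Z' : Fin s → Matrix (Fin K) (Fin N) ℂ}
    (hZ : ∀ i k j, HasDerivAt (fun t => Z t i k j) (Z' i k j) t) :
    HasDerivAt (fun t => calA b a (Z t)) (calA b a Z') t := by
  refine hasDerivAt_pi.2 fun l => ?_
  simp only [calA, calAi_eq_finner, finner]
  exact HasDerivAt.fun_sum fun i _ => HasDerivAt.fun_sum fun k _ =>
    HasDerivAt.fun_sum fun j _ => (hZ i k j).const_mul _

lemma hasDerivAt_residual (hh : HasDerivAt h h' t) (hx : HasDerivAt x x' t) :
    HasDerivAt (fun t => residual b a h0 x0 e (h t) (x t))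
      (calA b a fun i => rankOne (h' i) (x t i) + rankOne (h t i) (x' i)) t :=
  (hasDerivAt_calA b a fun i => hasDerivAt_rankOne_apply (hasDerivAt_pi.1 hh i)
    (hasDerivAt_pi.1 hx i)).sub_const (yvec b a h0 x0 e)

lemma re_finner_rankOne_add_rankOne (M : Matrix (Fin K) (Fin N) ℂ) (p p' : Fin K → ℂ)
    (q q' : Fin N → ℂ) :
    (finner M (rankOne p' q + rankOne p q')).re
      = (vinner (M.mulVec q) p').re + (vinner (M.conjTranspose.mulVec p) q').re := by
  rw [finner_add_right, finner_rankOne, finner_rankOne, vinner_mulVec_conjTranspose,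
    ← conj_vinner p, Complex.add_re, Complex.conj_re]

lemma hasDerivAt_Fobj (hh : HasDerivAt h h' t) (hx : HasDerivAt x x' t) :
    HasDerivAt (fun t => Fobj b a h0 x0 e (h t) (x t))
      (2 * (∑ i, (vinner (gradFh b a h0 x0 e (h t) (x t) i) (h' i)).re
        + ∑ i, (vinner (gradFx b a h0 x0 e (h t) (x t) i) (x' i)).re)) t := by
  refine (hasDerivAt_vnormSq (hasDerivAt_residual b a h0 x0 e hh hx)).congr_deriv ?_
  simp only [vinner_calA, Complex.re_sum, re_finner_rankOne_add_rankOne, sum_add_distrib, gradFh,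
    gradFx]

lemma re_vinner_ofReal_smul_left {n : ℕ} (r : ℝ) (u v : Fin n → ℂ) :
    (vinner ((r : ℂ) • u) v).re = r * (vinner u v).re := by
  rw [vinner_smul_left, Complex.conj_ofReal, Complex.re_ofReal_mul]

lemma gradGh_eq_smul (h : Fin s → Fin K → ℂ) (i : Fin s) :
    gradGh b ρ μ dd h i = ((ρ / (2 * dd i) : ℝ) : ℂ) •
      ((G0' (vnormSq (h i) / (2 * dd i)) : ℂ) • h i + ((L / (4 * μ ^ 2) : ℝ) : ℂ) •
        ∑ l, (G0' (L * ‖vinner (b l) (h i)‖ ^ 2 / (8 * dd i * μ ^ 2)) : ℂ) •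
          (vinner (b l) (h i) • b l)) := by
  ext k
  simp only [gradGh, Pi.smul_apply, Pi.add_apply, Finset.sum_apply, smul_eq_mul]

lemma hasDerivAt_Gi (i : Fin s) (hh : HasDerivAt h h' t) (hx : HasDerivAt x x' t) :
    HasDerivAt (fun t => Gi b ρ μ (dd i) (h t i) (x t i))
      (2 * ((vinner (gradGh b ρ μ dd (h t) i) (h' i)).re
        + (vinner (gradGx ρ dd (x t) i) (x' i)).re)) t := by
  have hhi := hasDerivAt_pi.1 hh i
  have hxi := hasDerivAt_pi.1 hx i
  refine ((((hasDerivAt_G0_vnormSq hhi (dd i)).add (hasDerivAt_G0_vnormSq hxi (dd i))).add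
    (hasDerivAt_sum_G0_norm_vinner_sq hhi b L (dd i) μ)).const_mul ρ).congr_deriv ?_
  have hgradGx : gradGx ρ dd (x t) i = ((ρ / (2 * dd i) : ℝ) : ℂ) •
      ((G0' (vnormSq (x t i) / (2 * dd i)) : ℂ) • x t i) := rfl
  simp only [gradGh_eq_smul, hgradGx, re_vinner_ofReal_smul_left, vinner_add_left,
    vinner_sum_left, Complex.add_re, Complex.re_sum]
  ring

lemma hasDerivAt_Ftil (hh : HasDerivAt h h' t) (hx : HasDerivAt x x' t) :
    HasDerivAt (fun t => Ftil b a h0 x0 e ρ μ dd (h t) (x t))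
      (2 * (∑ i, (vinner (gradH b a h0 x0 e ρ μ dd (h t) (x t) i) (h' i)).re
        + ∑ i, (vinner (gradX b a h0 x0 e ρ μ dd (h t) (x t) i) (x' i)).re)) t := by
  refine ((hasDerivAt_Fobj b a h0 x0 e hh hx).add (HasDerivAt.fun_sum (u := univ)
    fun i _ => hasDerivAt_Gi b ρ μ dd i hh hx)).congr_deriv ?_
  have hgradH : ∀ i, gradH b a h0 x0 e ρ μ dd (h t) (x t) i
      = gradFh b a h0 x0 e (h t) (x t) i + gradGh b ρ μ dd (h t) i := fun _ => rfl
  have hgradX : ∀ i, gradX b a h0 x0 e ρ μ dd (h t) (x t) i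
      = gradFx b a h0 x0 e (h t) (x t) i + gradGx ρ dd (x t) i := fun _ => rfl
  simp only [hgradH, hgradX, vinner_add_left, Complex.add_re, sum_add_distrib, ← mul_sum]
  ring

end Objective

section Scales

variable {s : ℕ} {d0 : Fin s → ℝ}

lemma le_mul_kappa (hd0 : ∀ i, 0 < d0 i) (i j : Fin s) : d0 j ≤ d0 i * kappa d0 := by
  have : Nonempty (Fin s) := ⟨i⟩
  obtain ⟨k, hk⟩ := exists_eq_ciInf_of_finite (f := d0)
  have hmin : 0 < ⨅ i, d0 i := hk ▸ hd0 k
  have hle_max : d0 j ≤ ⨆ i, d0 i := le_ciSup (Set.finite_range d0).bddAbove j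
  rw [kappa, mul_div_assoc', le_div_iff₀ hmin, mul_comm (d0 i)]
  exact mul_le_mul hle_max (ciInf_le (Set.finite_range d0).bddBelow i) hmin.le
    ((hd0 j).le.trans hle_max)

lemma one_le_kappa (hd0 : ∀ i, 0 < d0 i) (i : Fin s) : 1 ≤ kappa d0 :=
  le_of_mul_le_mul_left (by simpa using le_mul_kappa hd0 i i) (hd0 i)

lemma dtot_nonneg (d0 : Fin s → ℝ) : 0 ≤ dtot d0 := Real.sqrt_nonneg _

lemma dtot_sq (d0 : Fin s → ℝ) : dtot d0 ^ 2 = ∑ i, d0 i ^ 2 :=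
  Real.sq_sqrt (sum_nonneg fun _ _ => sq_nonneg _)

lemma dtot_pos (hd0 : ∀ i, 0 < d0 i) (i : Fin s) : 0 < dtot d0 :=
  Real.sqrt_pos.2 (sum_pos (fun i _ => pow_pos (hd0 i) 2) ⟨i, mem_univ i⟩)

lemma dtot_sq_le (hd0 : ∀ i, 0 < d0 i) (i : Fin s) :
    dtot d0 ^ 2 ≤ s * kappa d0 ^ 2 * d0 i ^ 2 := by
  calc dtot d0 ^ 2 = ∑ j, d0 j ^ 2 := dtot_sq d0
    _ ≤ ∑ _j : Fin s, (d0 i * kappa d0) ^ 2 :=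
        sum_le_sum fun j _ => pow_le_pow_left₀ (hd0 j).le (le_mul_kappa hd0 i j) 2
    _ = s * kappa d0 ^ 2 * d0 i ^ 2 := by
        rw [sum_const, card_univ, Fintype.card_fin, nsmul_eq_mul]
        ring

/-- The radius `ε d₀ / (√s κ)`: the common scale of the level `𝒩_F̃` and of the noise bound. -/
def localRadius (d0 : Fin s → ℝ) (ε : ℝ) : ℝ := ε * dtot d0 / (√s * kappa d0)

variable {ε : ℝ}

lemma localRadius_sq (d0 : Fin s → ℝ) (ε : ℝ) :
    localRadius d0 ε ^ 2 = ε ^ 2 * dtot d0 ^ 2 / (s * kappa d0 ^ 2) := by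
  rw [localRadius, div_pow, mul_pow, mul_pow, Real.sq_sqrt (Nat.cast_nonneg s)]

lemma localRadius_pos (hd0 : ∀ i, 0 < d0 i) (hε : 0 < ε) (i : Fin s) : 0 < localRadius d0 ε :=
  div_pos (mul_pos hε (dtot_pos hd0 i)) (mul_pos (Real.sqrt_pos.2 (Nat.cast_pos.2 i.pos))
    (one_pos.trans_le (one_le_kappa hd0 i)))

lemma localRadius_le (hd0 : ∀ i, 0 < d0 i) (hε : 0 ≤ ε) (i : Fin s) :
    localRadius d0 ε ≤ ε * d0 i := by
  have hs : (0 : ℝ) < s := Nat.cast_pos.2 i.pos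
  have hκ := one_pos.trans_le (one_le_kappa hd0 i)
  refine le_of_sq_le_sq ?_ (mul_nonneg hε (hd0 i).le)
  rw [localRadius_sq, mul_pow, div_le_iff₀ (by positivity), mul_assoc, mul_comm (d0 i ^ 2)]
  exact mul_le_mul_of_nonneg_left (dtot_sq_le hd0 i) (sq_nonneg ε)

lemma localRadius_sq_le_dtot_sq (hd0 : ∀ i, 0 < d0 i) (ε : ℝ) (i : Fin s) :
    localRadius d0 ε ^ 2 ≤ ε ^ 2 * dtot d0 ^ 2 := by
  have hsκ : 1 ≤ (s : ℝ) * kappa d0 ^ 2 :=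
    one_le_mul_of_one_le_of_one_le (by exact_mod_cast i.pos) (one_le_pow₀ (one_le_kappa hd0 i))
  rw [localRadius_sq]
  exact div_le_self (by positivity) hsκ

lemma inNF_iff_le_localRadius_sq {K N L : ℕ} {b : Fin L → Fin K → ℂ}
    {a : Fin s → Fin L → Fin N → ℂ} {h0 : Fin s → Fin K → ℂ} {x0 : Fin s → Fin N → ℂ}
    {e : Fin L → ℂ} {ρ μ : ℝ} {dd : Fin s → ℝ} {h : Fin s → Fin K → ℂ} {x : Fin s → Fin N → ℂ} :
    inNF b a h0 x0 e d0 ρ μ dd ε h x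
      ↔ Ftil b a h0 x0 e ρ μ dd h x ≤ localRadius d0 ε ^ 2 / 3 + vnormSq e := by
  rw [inNF, localRadius_sq, div_div, mul_comm (_ * _ : ℝ) 3, mul_assoc (3 : ℝ)]

end Scales

section Regularizer

variable {K N L s : ℕ} {b : Fin L → Fin K → ℂ} {a : Fin s → Fin L → Fin N → ℂ}
  {h0 : Fin s → Fin K → ℂ} {x0 : Fin s → Fin N → ℂ} {e : Fin L → ℂ} {ρ μ : ℝ}
  {h : Fin s → Fin K → ℂ} {x : Fin s → Fin N → ℂ}

lemma G0_nonneg (z : ℝ) : 0 ≤ G0 z := sq_nonneg _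

lemma sum_G0_nonneg (f : Fin L → ℝ) : 0 ≤ ∑ l, G0 (f l) := sum_nonneg fun l _ => G0_nonneg (f l)

/-- The bound `20 / 11 = 2 / 1.1` is what `d_i ≤ 1.1 d_{i0}` turns into the constants of `𝒩_d` and
`𝒩_μ`; `675 = 3 · 15²` comes from `ε ≤ 1/15`. -/
lemma le_of_mul_G0_le {D E z : ℝ} (hD : 0 < D) (hE : 0 ≤ E) (hρ : 0.81 * D + 2 * E ≤ ρ)
    (hz : ρ * G0 z ≤ D / 675 + E) : z ≤ 20 / 11 := by
  by_contra! hlt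
  have hG0 : (81 / 121 : ℝ) ≤ G0 z := by
    rw [G0, max_eq_left (by linarith)]
    nlinarith
  nlinarith

lemma Gi_nonneg (b : Fin L → Fin K → ℂ) (hρ : 0 ≤ ρ) (μ di : ℝ) (hi : Fin K → ℂ)
    (xi : Fin N → ℂ) : 0 ≤ Gi b ρ μ di hi xi :=
  mul_nonneg hρ (add_nonneg (add_nonneg (G0_nonneg _) (G0_nonneg _)) (sum_G0_nonneg _))

lemma mul_G0_vnormSq_left_le_Gi (hρ : 0 ≤ ρ) (μ di : ℝ) (hi : Fin K → ℂ) (xi : Fin N → ℂ) :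
    ρ * G0 (vnormSq hi / (2 * di)) ≤ Gi b ρ μ di hi xi := by
  refine mul_le_mul_of_nonneg_left ?_ hρ
  rw [add_assoc]
  exact le_add_of_nonneg_right (add_nonneg (G0_nonneg _) (sum_G0_nonneg _))

lemma mul_G0_vnormSq_right_le_Gi (hρ : 0 ≤ ρ) (μ di : ℝ) (hi : Fin K → ℂ) (xi : Fin N → ℂ) :
    ρ * G0 (vnormSq xi / (2 * di)) ≤ Gi b ρ μ di hi xi :=
  mul_le_mul_of_nonneg_left (le_add_of_le_of_nonneg (le_add_of_nonneg_left (G0_nonneg _))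
    (sum_G0_nonneg _)) hρ

lemma mul_G0_norm_vinner_le_Gi (hρ : 0 ≤ ρ) (μ di : ℝ) (hi : Fin K → ℂ) (xi : Fin N → ℂ)
    (l : Fin L) :
    ρ * G0 (L * ‖vinner (b l) hi‖ ^ 2 / (8 * di * μ ^ 2)) ≤ Gi b ρ μ di hi xi :=
  mul_le_mul_of_nonneg_left (le_add_of_nonneg_of_le (add_nonneg (G0_nonneg _) (G0_nonneg _))
    (single_le_sum (f := fun l => G0 (L * ‖vinner (b l) hi‖ ^ 2 / (8 * di * μ ^ 2)))
      (fun _ _ => G0_nonneg _) (mem_univ l))) hρ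

lemma Fobj_le_Ftil (hρ : 0 ≤ ρ) (dd : Fin s → ℝ) :
    Fobj b a h0 x0 e h x ≤ Ftil b a h0 x0 e ρ μ dd h x :=
  le_add_of_nonneg_right (sum_nonneg fun _ _ => Gi_nonneg b hρ _ _ _ _)

lemma Gi_le_Ftil (hρ : 0 ≤ ρ) (dd : Fin s → ℝ) (i : Fin s) :
    Gi b ρ μ (dd i) (h i) (x i) ≤ Ftil b a h0 x0 e ρ μ dd h x :=
  le_add_of_nonneg_of_le (vnormSq_nonneg _)
    (single_le_sum (f := fun i => Gi b ρ μ (dd i) (h i) (x i))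
      (fun _ _ => Gi_nonneg b hρ _ _ _ _) (mem_univ i))

lemma vnorm_le_of_vnormSq_div_le {n : ℕ} {v : Fin n → ℂ} {di d : ℝ} (hdi : 0 < di)
    (hd : di ≤ 1.1 * d) (hv : vnormSq v / (2 * di) ≤ 20 / 11) : vnorm v ≤ 2 * √d := by
  rw [div_le_iff₀ (by positivity)] at hv
  refine Real.sqrt_le_iff.2 ⟨by positivity, ?_⟩
  rw [mul_pow, Real.sq_sqrt (by linarith)]
  linarith

lemma sqrt_mul_le_of_sq_div_le {c r di d : ℝ} (hc : 0 ≤ c) (hμ : 0 < μ) (hdi : 0 < di)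
    (hd : di ≤ 1.1 * d) (hr : c * r ^ 2 / (8 * di * μ ^ 2) ≤ 20 / 11) :
    √c * r ≤ 4 * √d * μ := by
  have hd0 : 0 ≤ d := by linarith
  have hμ2 : 0 < μ ^ 2 := by positivity
  rw [div_le_iff₀ (by positivity)] at hr
  refine le_of_sq_le_sq ?_ (by positivity)
  rw [mul_pow, mul_pow, mul_pow, Real.sq_sqrt hd0, Real.sq_sqrt hc]
  linarith [mul_le_mul_of_nonneg_right hd hμ2.le]

end Regularizer

section Neighbourhoods

variable {K N L s : ℕ} {b : Fin L → Fin K → ℂ} {a : Fin s → Fin L → Fin N → ℂ}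
  {h0 : Fin s → Fin K → ℂ} {x0 : Fin s → Fin N → ℂ} {e : Fin L → ℂ}
  {h : Fin s → Fin K → ℂ} {x : Fin s → Fin N → ℂ} {d0 dd : Fin s → ℝ} {μ ρ ε : ℝ}

/-- The lower bound of the local restricted isometry property on `𝒩_d ∩ 𝒩_μ ∩ 𝒩_ε`; it controls
`‖ℋ(h,x) − X₀‖_F` by the size of the measurements. -/
def LowerLocalRIP (b : Fin L → Fin K → ℂ) (a : Fin s → Fin L → Fin N → ℂ)
    (h0 : Fin s → Fin K → ℂ) (x0 : Fin s → Fin N → ℂ) (d0 : Fin s → ℝ) (μ ε : ℝ) : Prop :=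
  ∀ (h : Fin s → Fin K → ℂ) (x : Fin s → Fin N → ℂ),
    inNd d0 h x → inNmu b d0 μ h → inNeps h0 x0 d0 ε h x →
      2 / 3 * famFrobSq (fun i => Hmap h x i - Hmap h0 x0 i)
        ≤ vnormSq (calA b a fun i => Hmap h x i - Hmap h0 x0 i)

lemma LocalRIP.lowerLocalRIP (hRIP : LocalRIP b a h0 x0 d0 μ ε) : LowerLocalRIP b a h0 x0 d0 μ ε :=
  fun h x hNd hNμ hNε => (hRIP h x hNd hNμ hNε).1

lemma nonneg_of_dtot_sq_add_le (hρ : (0.9 * dtot d0) ^ 2 + 2 * vnormSq e ≤ ρ) : 0 ≤ ρ :=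
  (add_nonneg (sq_nonneg _) (mul_nonneg zero_le_two (vnormSq_nonneg e))).trans hρ

lemma le_of_mul_G0_le_Gi (hd0 : ∀ i, 0 < d0 i) (hε : 0 < ε) (hε15 : ε ≤ 1 / 15)
    (hρ : (0.9 * dtot d0) ^ 2 + 2 * vnormSq e ≤ ρ) (hF : inNF b a h0 x0 e d0 ρ μ dd ε h x)
    (i : Fin s) {z : ℝ} (hz : ρ * G0 z ≤ Gi b ρ μ (dd i) (h i) (x i)) : z ≤ 20 / 11 := by
  have hD : 0 < dtot d0 ^ 2 := pow_pos (dtot_pos hd0 i) 2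
  have hE := vnormSq_nonneg e
  have hρ0 := nonneg_of_dtot_sq_add_le hρ
  have hlevel : localRadius d0 ε ^ 2 ≤ dtot d0 ^ 2 / 225 :=
    calc localRadius d0 ε ^ 2 ≤ ε ^ 2 * dtot d0 ^ 2 := localRadius_sq_le_dtot_sq hd0 ε i
      _ ≤ (1 / 15) ^ 2 * dtot d0 ^ 2 := by gcongr
      _ = dtot d0 ^ 2 / 225 := by ring
  refine le_of_mul_G0_le (ρ := ρ) hD hE (by linarith) ?_
  calc ρ * G0 z ≤ Ftil b a h0 x0 e ρ μ dd h x := hz.trans (Gi_le_Ftil hρ0 dd i)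
    _ ≤ localRadius d0 ε ^ 2 / 3 + vnormSq e := inNF_iff_le_localRadius_sq.1 hF
    _ ≤ dtot d0 ^ 2 / 675 + vnormSq e := by linarith

lemma inNd_of_inNF (hd0 : ∀ i, 0 < d0 i) (hε : 0 < ε) (hε15 : ε ≤ 1 / 15)
    (hdd : ∀ i, 0 < dd i ∧ dd i ≤ 1.1 * d0 i) (hρ : (0.9 * dtot d0) ^ 2 + 2 * vnormSq e ≤ ρ)
    (hF : inNF b a h0 x0 e d0 ρ μ dd ε h x) : inNd d0 h x := fun i =>
  have hρ0 := nonneg_of_dtot_sq_add_le hρ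
  have harg := fun z => le_of_mul_G0_le_Gi (z := z) hd0 hε hε15 hρ hF i
  ⟨vnorm_le_of_vnormSq_div_le (hdd i).1 (hdd i).2
      (harg _ (mul_G0_vnormSq_left_le_Gi hρ0 _ _ _ _)),
    vnorm_le_of_vnormSq_div_le (hdd i).1 (hdd i).2
      (harg _ (mul_G0_vnormSq_right_le_Gi hρ0 _ _ _ _))⟩

lemma inNmu_of_inNF (hd0 : ∀ i, 0 < d0 i) (hμ : 0 < μ) (hε : 0 < ε) (hε15 : ε ≤ 1 / 15)
    (hdd : ∀ i, 0 < dd i ∧ dd i ≤ 1.1 * d0 i) (hρ : (0.9 * dtot d0) ^ 2 + 2 * vnormSq e ≤ ρ)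
    (hF : inNF b a h0 x0 e d0 ρ μ dd ε h x) : inNmu b d0 μ h := fun i l =>
  have hρ0 := nonneg_of_dtot_sq_add_le hρ
  sqrt_mul_le_of_sq_div_le (Nat.cast_nonneg L) hμ (hdd i).1 (hdd i).2
    (le_of_mul_G0_le_Gi hd0 hε hε15 hρ hF i (mul_G0_norm_vinner_le_Gi hρ0 _ _ _ _ l))

lemma Fobj_eq (b : Fin L → Fin K → ℂ) (a : Fin s → Fin L → Fin N → ℂ)
    (h0 h : Fin s → Fin K → ℂ) (x0 x : Fin s → Fin N → ℂ) (e : Fin L → ℂ) :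
    Fobj b a h0 x0 e h x = vnormSq (calA b a fun i => Hmap h x i - Hmap h0 x0 i)
      - 2 * (vinner e (calA b a fun i => Hmap h x i - Hmap h0 x0 i)).re + vnormSq e := by
  rw [← vnormSq_sub, calA_sub, Fobj, sub_sub]
  rfl

lemma AadjNorm_nonneg (b : Fin L → Fin K → ℂ) (a : Fin s → Fin L → Fin N → ℂ) (e : Fin L → ℂ) :
    0 ≤ AadjNorm b a e := Real.iSup_nonneg fun _ => opNorm_nonneg _

lemma re_vinner_calA_le (b : Fin L → Fin K → ℂ) (a : Fin s → Fin L → Fin N → ℂ)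
    (h0 h : Fin s → Fin K → ℂ) (x0 x : Fin s → Fin N → ℂ) (e : Fin L → ℂ) :
    (vinner e (calA b a fun i => Hmap h x i - Hmap h0 x0 i)).re
      ≤ √2 * AadjNorm b a e * ∑ i, frob (Hmap h x i - Hmap h0 x0 i) := by
  rw [vinner_calA, mul_sum]
  refine (Complex.re_le_norm _).trans (norm_sum_le_of_le _ fun i _ => ?_)
  have hle : opNorm (calAdj b (a i) e) ≤ AadjNorm b a e :=
    le_ciSup (f := fun i => opNorm (calAdj b (a i) e)) (Set.finite_range _).bddAbove i
  exact (norm_finner_rankOne_sub_rankOne_le _ _ _ _ _).trans (mul_le_mul_of_nonneg_right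
    (mul_le_mul_of_nonneg_left hle (Real.sqrt_nonneg 2)) (frob_nonneg _))

lemma famFrob_sq (Z : Fin s → Matrix (Fin K) (Fin N) ℂ) : famFrob Z ^ 2 = famFrobSq Z :=
  Real.sq_sqrt (sum_nonneg fun i _ => frobSq_nonneg (Z i))

lemma frob_le_famFrob (Z : Fin s → Matrix (Fin K) (Fin N) ℂ) (i : Fin s) :
    frob (Z i) ≤ famFrob Z :=
  Real.sqrt_le_sqrt (single_le_sum (f := fun i => frobSq (Z i)) (fun i _ => frobSq_nonneg (Z i))
    (mem_univ i))

lemma sum_frob_le (Z : Fin s → Matrix (Fin K) (Fin N) ℂ) : ∑ i, frob (Z i) ≤ √s * famFrob Z := by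
  rw [famFrob, ← Real.sqrt_mul (Nat.cast_nonneg s)]
  refine Real.le_sqrt_of_sq_le ?_
  simpa [frob_sq, famFrobSq] using sq_sum_le_card_mul_sum_sq (s := univ) (f := fun i => frob (Z i))

/-- Cauchy–Schwarz over the blocks turns `1/s` in the noise bound into the `1/√s` of
`localRadius`. -/
lemma two_mul_re_vinner_calA_le
    (hAe : AadjNorm b a e ≤ ε * dtot d0 / (10 * √2 * s * kappa d0))
    (h0 h : Fin s → Fin K → ℂ) (x0 x : Fin s → Fin N → ℂ) :
    2 * (vinner e (calA b a fun i => Hmap h x i - Hmap h0 x0 i)).re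
      ≤ localRadius d0 ε / 5 * famFrob fun i => Hmap h x i - Hmap h0 x0 i := by
  set Z := fun i => Hmap h x i - Hmap h0 x0 i
  have hscale : 2 * (√2 * (ε * dtot d0 / (10 * √2 * s * kappa d0)) * √s)
      = localRadius d0 ε / 5 := by
    calc 2 * (√2 * (ε * dtot d0 / (10 * √2 * s * kappa d0)) * √s)
        = √2 / √2 * (√s / s) * (ε * dtot d0 / kappa d0) / 5 := by ring
      _ = localRadius d0 ε / 5 := by
        rw [div_self (by positivity), Real.sqrt_div_self, localRadius]
        ring
  calc 2 * (vinner e (calA b a Z)).re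
      ≤ 2 * (√2 * AadjNorm b a e * ∑ i, frob (Z i)) := by
        gcongr
        exact re_vinner_calA_le b a h0 h x0 x e
    _ ≤ 2 * (√2 * (ε * dtot d0 / (10 * √2 * s * kappa d0)) * (√s * famFrob Z)) := by
        gcongr
        · exact sum_nonneg fun i _ => frob_nonneg (Z i)
        · exact mul_nonneg (Real.sqrt_nonneg 2) ((AadjNorm_nonneg b a e).trans hAe)
        · exact sum_frob_le Z
    _ = localRadius d0 ε / 5 * famFrob Z := by
        rw [← hscale]
        ring

lemma famFrob_lt_localRadius (hd0 : ∀ i, 0 < d0 i) (hμ : 0 < μ) (hε : 0 < ε)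
    (hε15 : ε ≤ 1 / 15) (hdd : ∀ i, 0 < dd i ∧ dd i ≤ 1.1 * d0 i)
    (hρ : (0.9 * dtot d0) ^ 2 + 2 * vnormSq e ≤ ρ) (hRIP : LowerLocalRIP b a h0 x0 d0 μ ε)
    (hAe : AadjNorm b a e ≤ ε * dtot d0 / (10 * √2 * s * kappa d0))
    (hzε : inNeps h0 x0 d0 ε h x) (hF : inNF b a h0 x0 e d0 ρ μ dd ε h x) (i : Fin s) :
    famFrob (fun i => Hmap h x i - Hmap h0 x0 i) < localRadius d0 ε := by
  have hrip := hRIP h x (inNd_of_inNF hd0 hε hε15 hdd hρ hF)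
    (inNmu_of_inNF hd0 hμ hε hε15 hdd hρ hF) hzε
  have hnoise := two_mul_re_vinner_calA_le hAe h0 h x0 x
  have hlevel := (Fobj_le_Ftil (nonneg_of_dtot_sq_add_le hρ) dd).trans
    (inNF_iff_le_localRadius_sq.1 hF)
  rw [Fobj_eq] at hlevel
  rw [← famFrob_sq] at hrip
  have hr := localRadius_pos hd0 hε i
  set r := localRadius d0 ε
  set X := famFrob fun i => Hmap h x i - Hmap h0 x0 i
  have hquad : 2 / 3 * X ^ 2 ≤ r / 5 * X + r ^ 2 / 3 := by linarith
  by_contra! hle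
  have hr_sq := pow_le_pow_left₀ hr.le hle 2
  have hr_mul := mul_le_mul_of_nonneg_right hle (hr.le.trans hle)
  have hpos := pow_pos hr 2
  linarith only [hquad, hr_sq, hr_mul, hpos]

lemma deltaI_lt_of_inNF (hd0 : ∀ i, 0 < d0 i) (hμ : 0 < μ) (hε : 0 < ε)
    (hε15 : ε ≤ 1 / 15) (hdd : ∀ i, 0 < dd i ∧ dd i ≤ 1.1 * d0 i)
    (hρ : (0.9 * dtot d0) ^ 2 + 2 * vnormSq e ≤ ρ) (hRIP : LowerLocalRIP b a h0 x0 d0 μ ε)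
    (hAe : AadjNorm b a e ≤ ε * dtot d0 / (10 * √2 * s * kappa d0))
    (hzε : inNeps h0 x0 d0 ε h x) (hF : inNF b a h0 x0 e d0 ρ μ dd ε h x) (i : Fin s) :
    deltaI (h0 i) (x0 i) (d0 i) (h i) (x i) < ε := by
  rw [deltaI, div_lt_iff₀ (hd0 i)]
  calc frob (rankOne (h i) (x i) - rankOne (h0 i) (x0 i))
      ≤ famFrob fun i => Hmap h x i - Hmap h0 x0 i :=
        frob_le_famFrob (fun i => Hmap h x i - Hmap h0 x0 i) i
    _ < localRadius d0 ε := famFrob_lt_localRadius hd0 hμ hε hε15 hdd hρ hRIP hAe hzε hF i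
    _ ≤ ε * d0 i := localRadius_le hd0 hε.le i

end Neighbourhoods

section PointSpace

variable {K N s : ℕ}

/-- The space `ℂ^{s(K+N)}` of points `z = (h, x)`, with its Euclidean structure. -/
abbrev Point (K N s : ℕ) : Type := EuclideanSpace ℂ ((Fin s × Fin K) ⊕ (Fin s × Fin N))

/-- The point `z = (h, x)`. -/
def stack (h : Fin s → Fin K → ℂ) (x : Fin s → Fin N → ℂ) : Point K N s :=
  WithLp.toLp 2 (Sum.elim (fun p => h p.1 p.2) fun p => x p.1 p.2)

/-- The component `h` of a point `z = (h, x)`. -/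
def hPart (z : Point K N s) : Fin s → Fin K → ℂ := fun i k => z (Sum.inl (i, k))

/-- The component `x` of a point `z = (h, x)`. -/
def xPart (z : Point K N s) : Fin s → Fin N → ℂ := fun i j => z (Sum.inr (i, j))

lemma stack_hPart_xPart (z : Point K N s) : stack (hPart z) (xPart z) = z := by
  ext (p | p) <;> rfl

lemma norm_stack (u : Fin s → Fin K → ℂ) (v : Fin s → Fin N → ℂ) :
    ‖stack u v‖ = pairNorm u v := by
  simp only [EuclideanSpace.norm_eq, stack, Fintype.sum_sum_type, Fintype.sum_prod_type,
    Sum.elim_inl, Sum.elim_inr, pairNorm, vnormSq]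

lemma inner_stack (u : Fin s → Fin K → ℂ) (v : Fin s → Fin N → ℂ) (z : Point K N s) :
    inner ℝ (stack u v) z
      = ∑ i, (vinner (u i) (hPart z i)).re + ∑ i, (vinner (v i) (xPart z i)).re := by
  simp only [real_inner_eq_re_inner ℂ, PiLp.inner_apply, stack, hPart, xPart,
    Fintype.sum_sum_type, Fintype.sum_prod_type, Sum.elim_inl, Sum.elim_inr, vinner,
    RCLike.inner_apply', RCLike.re_eq_complex_re, Complex.re_sum]

lemma stack_sub_stack (h h' : Fin s → Fin K → ℂ) (x x' : Fin s → Fin N → ℂ) :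
    stack h x - stack h' x' = stack (h - h') (x - x') := by
  ext (p | p) <;> rfl

lemma hPart_add_smul (z w : Point K N s) (t : ℝ) :
    hPart (z + t • w) = shiftV (hPart z) (hPart w) t := rfl

lemma xPart_add_smul (z w : Point K N s) (t : ℝ) :
    xPart (z + t • w) = shiftV (xPart z) (xPart w) t := rfl

lemma hasDerivAt_shiftV {n : ℕ} (u w : Fin s → Fin n → ℂ) (t : ℝ) :
    HasDerivAt (shiftV u w) w t := by
  refine hasDerivAt_pi.2 fun i => hasDerivAt_pi.2 fun k => ?_
  simpa [shiftV] using (((hasDerivAt_id t).ofReal_comp).mul_const (w i k)).const_add (u i k)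

lemma shiftV_zero {n : ℕ} (u w : Fin s → Fin n → ℂ) : shiftV u w 0 = u := by
  ext i k
  simp only [shiftV, Complex.ofReal_zero, zero_mul, add_zero]

lemma continuous_deltaI (h0 : Fin s → Fin K → ℂ) (x0 : Fin s → Fin N → ℂ) (d0 : Fin s → ℝ)
    (i : Fin s) : Continuous fun z : Point K N s =>
      deltaI (h0 i) (x0 i) (d0 i) (hPart z i) (xPart z i) := by
  simp only [deltaI, frob, frobSq, rankOne, hPart, xPart, Matrix.sub_apply, Matrix.of_apply]
  fun_prop

variable {L : ℕ} (b : Fin L → Fin K → ℂ) (a : Fin s → Fin L → Fin N → ℂ)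
  (h0 : Fin s → Fin K → ℂ) (x0 : Fin s → Fin N → ℂ) (e : Fin L → ℂ) (ρ μ : ℝ) (dd : Fin s → ℝ)

/-- The stacked Wirtinger gradient `∇F̃(z)`; it is half the gradient of `F̃` for the real
Euclidean structure. -/
def wirtingerGrad (z : Point K N s) : Point K N s :=
  stack (gradH b a h0 x0 e ρ μ dd (hPart z) (xPart z))
    (gradX b a h0 x0 e ρ μ dd (hPart z) (xPart z))

lemma hasLineDerivAt_Ftil (z w : Point K N s) :
    HasLineDerivAt ℝ (fun z : Point K N s => Ftil b a h0 x0 e ρ μ dd (hPart z) (xPart z))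
      (2 * inner ℝ (wirtingerGrad b a h0 x0 e ρ μ dd z) w) z w := by
  have hderiv := hasDerivAt_Ftil b a h0 x0 e ρ μ dd (hasDerivAt_shiftV (hPart z) (hPart w) 0)
    (hasDerivAt_shiftV (xPart z) (xPart w) 0)
  rw [shiftV_zero, shiftV_zero, ← inner_stack] at hderiv
  exact hderiv

lemma norm_wirtingerGrad_sq (z : Point K N s) :
    ‖wirtingerGrad b a h0 x0 e ρ μ dd z‖ ^ 2
      = gradNormSq b a h0 x0 e ρ μ dd (hPart z) (xPart z) := by
  rw [wirtingerGrad, norm_stack, pairNorm, gradNormSq, Real.sq_sqrt]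
  exact add_nonneg (sum_nonneg fun _ _ => vnormSq_nonneg _) (sum_nonneg fun _ _ => vnormSq_nonneg _)

lemma norm_wirtingerGrad_sub (z w : Point K N s) :
    ‖wirtingerGrad b a h0 x0 e ρ μ dd w - wirtingerGrad b a h0 x0 e ρ μ dd z‖
      = √(gradDiffNormSq b a h0 x0 e ρ μ dd (hPart z) (xPart z) (hPart w) (xPart w)) := by
  rw [wirtingerGrad, wirtingerGrad, stack_sub_stack, norm_stack]
  rfl

lemma stack_sub_smul_wirtingerGrad (h : Fin s → Fin K → ℂ) (x : Fin s → Fin N → ℂ) (η : ℝ) :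
    stack h x - η • wirtingerGrad b a h0 x0 e ρ μ dd (stack h x)
      = stack (fun i k => h i k - (η : ℂ) * gradH b a h0 x0 e ρ μ dd h x i k)
        (fun i j => x i j - (η : ℂ) * gradX b a h0 x0 e ρ μ dd h x i j) := by
  ext (p | p) <;> rfl

variable {b a h0 x0 e ρ μ dd} in
lemma norm_wirtingerGrad_sub_le {d0 : Fin s → ℝ} {ε CL : ℝ}
    (hLip : ∀ (h : Fin s → Fin K → ℂ) (x : Fin s → Fin N → ℂ)
        (wh : Fin s → Fin K → ℂ) (wx : Fin s → Fin N → ℂ),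
      (∀ τ : ℝ, τ ∈ Set.Icc (0 : ℝ) 1 →
        inNeps h0 x0 d0 ε (shiftV h wh τ) (shiftV x wx τ) ∧
        inNF b a h0 x0 e d0 ρ μ dd ε (shiftV h wh τ) (shiftV x wx τ)) →
      √(gradDiffNormSq b a h0 x0 e ρ μ dd h x (shiftV h wh 1) (shiftV x wx 1))
        ≤ CL * pairNorm wh wx)
    (z w : Point K N s)
    (hseg : segment ℝ z w ⊆ {z | inNeps h0 x0 d0 ε (hPart z) (xPart z) ∧
      inNF b a h0 x0 e d0 ρ μ dd ε (hPart z) (xPart z)}) :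
    ‖wirtingerGrad b a h0 x0 e ρ μ dd w - wirtingerGrad b a h0 x0 e ρ μ dd z‖
      ≤ CL * ‖w - z‖ := by
  have hpath : ∀ τ : ℝ, τ ∈ Set.Icc (0 : ℝ) 1 →
      inNeps h0 x0 d0 ε (shiftV (hPart z) (hPart (w - z)) τ)
        (shiftV (xPart z) (xPart (w - z)) τ) ∧
      inNF b a h0 x0 e d0 ρ μ dd ε (shiftV (hPart z) (hPart (w - z)) τ)
        (shiftV (xPart z) (xPart (w - z)) τ) := by
    intro τ hτ
    have hmem : z + τ • (w - z) ∈ segment ℝ z w := by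
      rw [segment_eq_image']
      exact ⟨τ, hτ, rfl⟩
    rw [← hPart_add_smul, ← xPart_add_smul]
    exact hseg hmem
  have hbound := hLip _ _ _ _ hpath
  rw [← hPart_add_smul, ← xPart_add_smul, one_smul, add_sub_cancel, ← norm_stack,
    stack_hPart_xPart] at hbound
  rwa [norm_wirtingerGrad_sub]

lemma isClosed_setOf_inNeps (d0 : Fin s → ℝ) (ε : ℝ) :
    IsClosed {z : Point K N s | inNeps h0 x0 d0 ε (hPart z) (xPart z)} := by
  simp only [inNeps, Set.ofPred_forall]
  exact isClosed_iInter fun i => isClosed_le (continuous_deltaI h0 x0 d0 i) continuous_const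

lemma setOf_inNeps_mem_nhds {d0 : Fin s → ℝ} {ε : ℝ} {z : Point K N s}
    (hz : ∀ i, deltaI (h0 i) (x0 i) (d0 i) (hPart z i) (xPart z i) < ε) :
    {z : Point K N s | inNeps h0 x0 d0 ε (hPart z) (xPart z)} ∈ 𝓝 z := by
  filter_upwards [Filter.eventually_all.2 fun i =>
    (continuous_deltaI h0 x0 d0 i).continuousAt.eventually_lt_const (hz i)] with w hw i
  exact (hw i).le

end PointSpace

theorem statement3_general
    {K N L s : ℕ} (b : Fin L → Fin K → ℂ) (a : Fin s → Fin L → Fin N → ℂ)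
    (h0 : Fin s → Fin K → ℂ) (x0 : Fin s → Fin N → ℂ)
    (d0 : Fin s → ℝ) (hd0 : ∀ i, 0 < d0 i)
    (e : Fin L → ℂ) (μ ρ ε : ℝ) (dd : Fin s → ℝ)
    (hμ : 0 < μ) (hε : 0 < ε) (hε15 : ε ≤ 1 / 15)
    (hdd : ∀ i, 0 < dd i ∧ dd i ≤ 1.1 * d0 i)
    (hρ : (0.9 * dtot d0) ^ 2 + 2 * vnormSq e ≤ ρ)
    (hRIP : LowerLocalRIP b a h0 x0 d0 μ ε)
    (hAe : AadjNorm b a e ≤ ε * dtot d0 / (10 * √2 * s * kappa d0))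
    (CL η : ℝ) (hη : 0 ≤ η) (hCLη : CL * η ≤ 1)
    (hLip : ∀ (h : Fin s → Fin K → ℂ) (x : Fin s → Fin N → ℂ)
        (wh : Fin s → Fin K → ℂ) (wx : Fin s → Fin N → ℂ),
      (∀ τ : ℝ, τ ∈ Set.Icc (0 : ℝ) 1 →
        inNeps h0 x0 d0 ε (shiftV h wh τ) (shiftV x wx τ) ∧
        inNF b a h0 x0 e d0 ρ μ dd ε (shiftV h wh τ) (shiftV x wx τ)) →
      √(gradDiffNormSq b a h0 x0 e ρ μ dd h x (shiftV h wh 1) (shiftV x wx 1))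
        ≤ CL * pairNorm wh wx)
    (h : Fin s → Fin K → ℂ) (x : Fin s → Fin N → ℂ)
    (hzε : inNeps h0 x0 d0 ε h x) (hzF : inNF b a h0 x0 e d0 ρ μ dd ε h x) :
    inNeps h0 x0 d0 ε
        (fun i k => h i k - (η : ℂ) * gradH b a h0 x0 e ρ μ dd h x i k)
        (fun i j => x i j - (η : ℂ) * gradX b a h0 x0 e ρ μ dd h x i j)
    ∧ inNF b a h0 x0 e d0 ρ μ dd ε
        (fun i k => h i k - (η : ℂ) * gradH b a h0 x0 e ρ μ dd h x i k)
        (fun i j => x i j - (η : ℂ) * gradX b a h0 x0 e ρ μ dd h x i j)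
    ∧ Ftil b a h0 x0 e ρ μ dd
        (fun i k => h i k - (η : ℂ) * gradH b a h0 x0 e ρ μ dd h x i k)
        (fun i j => x i j - (η : ℂ) * gradX b a h0 x0 e ρ μ dd h x i j)
      ≤ Ftil b a h0 x0 e ρ μ dd h x - η * gradNormSq b a h0 x0 e ρ μ dd h x := by
  have hstep := half_gradient_step_mem_and_le (hasLineDerivAt_Ftil b a h0 x0 e ρ μ dd)
    (isClosed_setOf_inNeps h0 x0 d0 ε)
    (fun z hzε hzF => setOf_inNeps_mem_nhds h0 x0
      (deltaI_lt_of_inNF hd0 hμ hε hε15 hdd hρ hRIP hAe hzε hzF))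
    (norm_wirtingerGrad_sub_le hLip) hη hCLη (z := stack h x) ⟨hzε, hzF⟩
  rw [stack_sub_smul_wirtingerGrad, norm_wirtingerGrad_sq] at hstep
  exact and_assoc.1 hstep

/-- one gradient descent step stays in `𝒩_ε ∩ 𝒩_F̃` and decreases `F̃`. -/
theorem statement3
    {K N L s : ℕ} (hK : 0 < K) (hN : 0 < N) (hL : 0 < L) (hs : 0 < s)
    (b : Fin L → Fin K → ℂ) (hb : BtBeqI b)
    (a : Fin s → Fin L → Fin N → ℂ)
    (h0 : Fin s → Fin K → ℂ) (x0 : Fin s → Fin N → ℂ)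
    (d0 : Fin s → ℝ) (hd0 : ∀ i, 0 < d0 i)
    (hh0 : ∀ i, vnorm (h0 i) = Real.sqrt (d0 i))
    (hx0 : ∀ i, vnorm (x0 i) = Real.sqrt (d0 i))
    (e : Fin L → ℂ) (μ ρ d ε : ℝ) (dd : Fin s → ℝ)
    (hμ : 0 < μ) (hε : 0 < ε) (hε15 : ε ≤ 1 / 15)
    (hdd : ∀ i, 0.9 * d0 i ≤ dd i ∧ dd i ≤ 1.1 * d0 i)
    (hdlow : 0.9 * dtot d0 ≤ d) (hdhigh : d ≤ 1.1 * dtot d0)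
    (hρ : d ^ 2 + 2 * vnormSq e ≤ ρ)
    (hRIP : LocalRIP b a h0 x0 d0 μ ε)
    (hAe : AadjNorm b a e ≤ ε * dtot d0 / (10 * Real.sqrt 2 * (s : ℝ) * kappa d0))
    (CL η : ℝ) (hCL : 0 < CL) (hη0 : 0 < η) (hηCL : η ≤ 1 / CL)
    (hLip : ∀ (h : Fin s → Fin K → ℂ) (x : Fin s → Fin N → ℂ)
        (wh : Fin s → Fin K → ℂ) (wx : Fin s → Fin N → ℂ),
      (∀ τ : ℝ, τ ∈ Set.Icc (0 : ℝ) 1 →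
        inNeps h0 x0 d0 ε (shiftV h wh τ) (shiftV x wx τ) ∧
        inNF b a h0 x0 e d0 ρ μ dd ε (shiftV h wh τ) (shiftV x wx τ)) →
      ∀ t : ℝ, t ∈ Set.Icc (0 : ℝ) 1 →
        Real.sqrt (gradDiffNormSq b a h0 x0 e ρ μ dd h x (shiftV h wh t) (shiftV x wx t))
          ≤ CL * t * pairNorm wh wx)
    (h : Fin s → Fin K → ℂ) (x : Fin s → Fin N → ℂ)
    (hzε : inNeps h0 x0 d0 ε h x) (hzF : inNF b a h0 x0 e d0 ρ μ dd ε h x) :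
    inNeps h0 x0 d0 ε
        (fun i k => h i k - (η : ℂ) * gradH b a h0 x0 e ρ μ dd h x i k)
        (fun i j => x i j - (η : ℂ) * gradX b a h0 x0 e ρ μ dd h x i j)
    ∧ inNF b a h0 x0 e d0 ρ μ dd ε
        (fun i k => h i k - (η : ℂ) * gradH b a h0 x0 e ρ μ dd h x i k)
        (fun i j => x i j - (η : ℂ) * gradX b a h0 x0 e ρ μ dd h x i j)
    ∧ Ftil b a h0 x0 e ρ μ dd
        (fun i k => h i k - (η : ℂ) * gradH b a h0 x0 e ρ μ dd h x i k)
        (fun i j => x i j - (η : ℂ) * gradX b a h0 x0 e ρ μ dd h x i j)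
      ≤ Ftil b a h0 x0 e ρ μ dd h x - η * gradNormSq b a h0 x0 e ρ μ dd h x := by
  have hdlow_sq : (0.9 * dtot d0) ^ 2 ≤ d ^ 2 :=
    pow_le_pow_left₀ (mul_nonneg (by norm_num) (dtot_nonneg d0)) hdlow 2
  exact statement3_general b a h0 x0 d0 hd0 e μ ρ ε dd hμ hε hε15
    (fun i => ⟨by linarith [hd0 i, hdd i], (hdd i).2⟩) (by linarith) hRIP.lowerLocalRIP hAe CL η
    hη0.le ((le_div_iff₀' hCL).1 hηCL)
    (fun h x wh wx hseg => by simpa using hLip h x wh wx hseg 1 (by simp)) h x hzε hzF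

end RGD
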